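/- Let G be a finite simple bridgeless cubic graph on a vertex set V and let uw be an edge of G. Let G' be the simple graph on V ∪ {s, t} (where s and t are two new vertices) whose edges are all edges of G except uw, together with the edges us, sw, and st. Then G' admits a proper edge-coloring with 7 colors in which every edge except the pendant edge st is poor or rich. -/

import Mathlib

open SimpleGraph

/-- A proper edge-coloring: distinct edges of `G` sharing an endpoint get different colors. -/
def IsProperEdgeColoring {V C : Type*} (G : SimpleGraph V) (c : Sym2 V → C) : Prop :=
  ∀ e ∈ G.edgeSet, ∀ f ∈ G.edgeSet, e ≠ f → (∃ v : V, v ∈ e ∧ v ∈ f) → c e ≠ c f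

/-- `S_c(v)`: the set of colors appearing on edges incident to `v`. -/
def colorSet {V C : Type*} (G : SimpleGraph V) (c : Sym2 V → C) (v : V) : Set C :=
  c '' G.incidenceSet v

/-- The edge `uv` is poor: exactly 3 colors appear around its endpoints. -/
def IsPoorAt {V C : Type*} (G : SimpleGraph V) (c : Sym2 V → C) (u v : V) : Prop :=
  (colorSet G c u ∪ colorSet G c v).ncard = 3

/-- The edge `uv` is rich: exactly 5 colors appear around its endpoints. -/
def IsRichAt {V C : Type*} (G : SimpleGraph V) (c : Sym2 V → C) (u v : V) : Prop :=
  (colorSet G c u ∪ colorSet G c v).ncard = 5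

/-- A normal edge-coloring: a proper edge-coloring in which every edge is poor or rich. -/
def IsNormalEdgeColoring {V C : Type*} (G : SimpleGraph V) (c : Sym2 V → C) : Prop :=
  IsProperEdgeColoring G c ∧
    ∀ u v : V, G.Adj u v → IsPoorAt G c u v ∨ IsRichAt G c u v

/-- A nowhere-zero flow with values in an additive group `M` (all elements self-inverse in our
applications): nonzero on every edge, and at every vertex the values on incident edges sum to 0. -/
def IsNowhereZeroFlow {V M : Type*} [AddCommMonoid M] (G : SimpleGraph V)
    (θ : Sym2 V → M) : Prop :=
  (∀ e ∈ G.edgeSet, θ e ≠ 0) ∧ ∀ v : V, ∑ᶠ e ∈ G.incidenceSet v, θ e = 0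

/-- `G` is `k`-edge-connected: connected, and still connected after deleting any set of
fewer than `k` edges. -/
def EdgeConnGe {V : Type*} (G : SimpleGraph V) (k : ℕ) : Prop :=
  G.Connected ∧ ∀ s : Set (Sym2 V), s.ncard < k → (G.deleteEdges s).Connected

/-- `G` is cubic: every vertex has degree 3. -/
def IsCubic {V : Type*} (G : SimpleGraph V) : Prop :=
  ∀ v : V, (G.neighborSet v).ncard = 3

/-- `G` is bridgeless: no edge is a bridge. -/
def Bridgeless {V : Type*} (G : SimpleGraph V) : Prop :=
  ∀ e ∈ G.edgeSet, ¬ G.IsBridge e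

/-- The graph obtained from `G` by subdividing the edge `uw` with a new vertex `Sum.inr 0`
and attaching a pendant edge from `Sum.inr 0` to the new degree-one vertex `Sum.inr 1`. -/
def subdividePendant {V : Type*} (G : SimpleGraph V) (u w : V) : SimpleGraph (V ⊕ Fin 2) :=
  SimpleGraph.fromEdgeSet
    ((Sym2.map Sum.inl '' (G.edgeSet \ {s(u, w)})) ∪
      {s(Sum.inl u, Sum.inr 0), s(Sum.inl w, Sum.inr 0), s(Sum.inr 0, Sum.inr 1)})


namespace Pf

structure IsRk {α : Type*} [DecidableEq α] (r : Finset α → ℕ) : Prop where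
  empty : r ∅ = 0
  mono : ∀ A B, A ⊆ B → r A ≤ r B
  unit : ∀ e A, r (insert e A) ≤ r A + 1
  sub : ∀ A B, r (A ∪ B) + r (A ∩ B) ≤ r A + r B

variable {α : Type*} [DecidableEq α]

theorem IsRk.le_card {r : Finset α → ℕ} (h : IsRk r) (A : Finset α) : r A ≤ A.card := by
  induction A using Finset.induction_on with
  | empty => simp [h.empty]
  | insert e A he ih => rw [Finset.card_insert_of_notMem he]; have := h.unit e A; omega

theorem IsRk.contract {r : Finset α → ℕ} (h : IsRk r) (T : Finset α) :
    IsRk (fun B => r (T ∪ B) - r T) where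
  empty := by simp
  mono A B hAB := by
    have := h.mono (T ∪ A) (T ∪ B) (Finset.union_subset_union_right hAB)
    omega
  unit e A := by
    have := h.unit e (T ∪ A)
    have h2 := h.mono T (T ∪ A) Finset.subset_union_left
    simp only [Finset.union_insert]; omega
  sub A B := by
    have h1 := h.sub (T ∪ A) (T ∪ B)
    have e1 : (T ∪ A) ∪ (T ∪ B) = T ∪ (A ∪ B) := by grind
    have e2 : (T ∪ A) ∩ (T ∪ B) = T ∪ (A ∩ B) := by grind
    rw [e1, e2] at h1
    have h2 := h.mono T (T ∪ A) Finset.subset_union_left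
    have h3 := h.mono T (T ∪ B) Finset.subset_union_left
    have h4 := h.mono T (T ∪ (A ∩ B)) Finset.subset_union_left
    have h5 := h.mono T (T ∪ (A ∪ B)) Finset.subset_union_left
    omega

theorem IsRk.glue {r : Finset α → ℕ} (h : IsRk r) {T I J : Finset α} (hI : I ⊆ T)
    (h1 : I.card ≤ r I) (h2 : J.card ≤ r (T ∪ J) - r T) (hd : Disjoint J T) :
    (I ∪ J).card ≤ r (I ∪ J) := by
  have h3 := h.sub T (I ∪ J)
  have e1 : T ∪ (I ∪ J) = T ∪ J := by grind
  have e2 : T ∩ (I ∪ J) = I := by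
    rw [Finset.disjoint_left] at hd; grind
  rw [e1, e2] at h3
  have := Finset.card_union_le I J
  have h2 := h.mono T (T ∪ J) Finset.subset_union_left
  omega

theorem cover (n : ℕ) : ∀ (E : Finset α), E.card = n → ∀ r : Fin 3 → Finset α → ℕ,
    (∀ i, IsRk (r i)) → (∀ A ⊆ E, A.card ≤ ∑ i, r i A) →
    ∃ c : α → Fin 3, ∀ i, (E.filter (fun x => c x = i)).card ≤ r i (E.filter (fun x => c x = i)) := by
  induction n using Nat.strong_induction_on with
  | _ n ih =>
  intro E hE r hr hc
  by_cases hE0 : E = ∅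
  · subst hE0; exact ⟨fun _ => 0, by simp⟩
  by_cases ht : ∃ A ⊂ E, A ≠ ∅ ∧ ∑ i, r i A ≤ A.card
  · obtain ⟨A, hAE, hA0, hA⟩ := ht
    obtain ⟨c1, hc1⟩ := ih A.card (hE ▸ Finset.card_lt_card hAE) A rfl r hr
      (fun B hB => hc B (hB.trans hAE.1))
    have hlt : (E \ A).card < n := by
      rw [Finset.card_sdiff_of_subset hAE.1]
      have := Finset.card_pos.2 (Finset.nonempty_iff_ne_empty.2 hA0)
      have := Finset.card_le_card hAE.1
      omega
    obtain ⟨c2, hc2⟩ := ih _ hlt (E \ A) rfl (fun i B => r i (A ∪ B) - r i A)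
      (fun i => (hr i).contract A) (by
        intro B hB
        have h1 := hc (A ∪ B) (by grind)
        have hd : Disjoint A B := by rw [Finset.disjoint_left]; grind
        rw [Finset.card_union_of_disjoint hd] at h1
        have h2 : ∀ i, r i A ≤ r i (A ∪ B) := fun i => (hr i).mono _ _ Finset.subset_union_left
        have := h2 0; have := h2 1; have := h2 2
        simp only [Fin.sum_univ_three] at *
        omega)
    refine ⟨fun x => if x ∈ A then c1 x else c2 x, fun i => ?_⟩
    have e : E.filter (fun x => (if x ∈ A then c1 x else c2 x) = i)
        = A.filter (fun x => c1 x = i) ∪ (E \ A).filter (fun x => c2 x = i) := by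
      have := hAE.1
      ext x; simp only [Finset.mem_filter, Finset.mem_union, Finset.mem_sdiff]
      by_cases hx : x ∈ A
      · simp [hx, this hx]
      · simp [hx]
    rw [e]
    refine (hr i).glue (Finset.filter_subset _ _) (hc1 i) (hc2 i) ?_
    rw [Finset.disjoint_left]; grind
  · push Not at ht
    obtain ⟨e, he⟩ := Finset.nonempty_iff_ne_empty.2 hE0
    have h1 := hc {e} (by simpa using he)
    have : ∃ i0, 1 ≤ r i0 {e} := by
      by_contra! hcon
      have a0 := hcon 0; have a1 := hcon 1; have a2 := hcon 2
      simp only [Fin.sum_univ_three, Finset.card_singleton] at h1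
      omega
    obtain ⟨i0, hi0⟩ := this
    have hi1 : r i0 {e} = 1 := le_antisymm (by simpa using (hr i0).le_card {e}) hi0
    let T : Fin 3 → Finset α := fun i => if i = i0 then {e} else ∅
    have hT : ∀ i A, r i A ≤ r i (T i ∪ A) - r i (T i) + (if i = i0 then 1 else 0) := by
      intro i A
      by_cases h : i = i0
      · subst h; simp only [T, if_true, hi1]
        have := (hr i).mono A ({e} ∪ A) Finset.subset_union_right
        omega
      · simp [T, h, (hr i).empty]
    obtain ⟨c, hcc⟩ := ih (E.erase e).card (by rw [← hE]; exact Finset.card_erase_lt_of_mem he)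
      (E.erase e) rfl (fun i B => r i (T i ∪ B) - r i (T i)) (fun i => (hr i).contract _) (by
        intro A hA
        by_cases hA0 : A = ∅
        · subst hA0; simp
        have hAE : A ⊂ E := lt_of_le_of_lt hA (Finset.erase_ssubset he)
        have h2 := ht A hAE (Finset.nonempty_iff_ne_empty.2 hA0)
        have h3 : ∑ i, r i A ≤ ∑ i, (r i (T i ∪ A) - r i (T i) + (if i = i0 then 1 else 0)) :=
          Finset.sum_le_sum (fun i _ => hT i A)
        rw [Finset.sum_add_distrib] at h3
        simp only [Finset.sum_ite_eq', Finset.mem_univ, if_true] at h3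
        omega)
    refine ⟨Function.update c e i0, fun i => ?_⟩
    have e' : E.filter (fun x => Function.update c e i0 x = i)
        = T i ∪ (E.erase e).filter (fun x => c x = i) := by
      ext x; simp only [Finset.mem_filter, Finset.mem_union, Finset.mem_erase, T]
      by_cases hx : x = e
      · subst hx; simp only [Function.update_self, he]; by_cases h : i = i0
        · simp [h]
        · simp [h]; exact fun h' => h h'.symm
      · rw [Function.update_of_ne hx]; by_cases h : i = i0 <;> simp [h, hx]
    rw [e']
    refine (hr i).glue subset_rfl ?_ (hcc i) ?_
    · by_cases h : i = i0
      · subst h; simp [T, hi1]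
      · simp [T, h]
    · rw [Finset.disjoint_left]
      intro x hx; simp only [Finset.mem_filter, Finset.mem_erase] at hx
      by_cases h : i = i0 <;> simp [T, h, hx.1.1]

end Pf

namespace Pf
open Module Submodule

set_option linter.unusedSectionVars false
section lin
variable {Q : Type*} [AddCommGroup Q] [Module (ZMod 2) Q] [FiniteDimensional (ZMod 2) Q]

/-- dimension -/
noncomputable def dm (U : Submodule (ZMod 2) Q) : ℕ := finrank (ZMod 2) U
/-- dimension of the span -/
noncomputable def dms (A : Finset Q) : ℕ := dm (span (ZMod 2) (A : Set Q))

theorem dm_mono {U W : Submodule (ZMod 2) Q} (h : U ≤ W) : dm U ≤ dm W := Submodule.finrank_mono h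
theorem dm_sup (U W : Submodule (ZMod 2) Q) : dm (U ⊔ W) + dm (U ⊓ W) = dm U + dm W :=
  Submodule.finrank_sup_add_finrank_inf_eq U W
theorem dm_sup_le (U W : Submodule (ZMod 2) Q) : dm (U ⊔ W) ≤ dm U + dm W := by
  have := dm_sup U W; omega
theorem dm_single_le (e : Q) : dm (span (ZMod 2) {e}) ≤ 1 := by
  have h2 := finrank_span_le_card (R := ZMod 2) ({e} : Set Q)
  simpa [dm] using h2
theorem dm_single (e : Q) (he : e ≠ 0) : dm (span (ZMod 2) {e}) = 1 := finrank_span_singleton he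

theorem dms_le (A : Finset Q) : dms A ≤ A.card := finrank_span_finset_le_card (R := ZMod 2) A

theorem rk_lin [DecidableEq Q] : IsRk (dms (Q := Q)) where
  empty := by simp [dms, dm]
  mono A B h := dm_mono (span_mono (by exact_mod_cast h))
  unit e A := by
    simp only [dms, Finset.coe_insert]
    rw [span_insert]
    have := dm_sup_le (span (ZMod 2) {e}) (span (ZMod 2) (A : Set Q))
    have h2 := dm_single_le e
    omega
  sub A B := by
    simp only [dms, Finset.coe_union, span_union]
    have := dm_sup (span (ZMod 2) (A : Set Q)) (span (ZMod 2) (B : Set Q))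
    have h2 : dm (span (ZMod 2) ((A ∩ B : Finset Q) : Set Q)) ≤
      dm (span (ZMod 2) (A : Set Q) ⊓ span (ZMod 2) (B : Set Q)) := by
      apply dm_mono
      refine le_inf (span_mono ?_) (span_mono ?_) <;> simp
    omega

theorem exists_functional (T : Finset Q)
    (h : T.card ≤ dms T) (a : Q → ZMod 2) :
    ∃ l : Q →ₗ[ZMod 2] ZMod 2, ∀ x ∈ T, l x = a x := by
  have hli : LinearIndependent (ZMod 2) (fun x : T => (x : Q)) := by
    rw [linearIndependent_iff_card_le_finrank_span]
    have hr : Set.range (fun x : T => (x : Q)) = (T : Set Q) := by ext; simp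
    rw [hr]
    simpa [Set.finrank, dms, dm] using h
  obtain ⟨l, hl⟩ := LinearMap.exists_extend (p := span (ZMod 2) (Set.range (fun x : T => (x : Q))))
    ((Basis.span hli).constr (ZMod 2) (fun x : T => a x))
  refine ⟨l, fun x hx => ?_⟩
  have h1 := congrArg (fun g => g (Basis.span hli ⟨x, hx⟩)) hl
  simp only [Basis.constr_basis] at h1
  rw [← h1]
  simp [Basis.span_apply]

open scoped Classical in
/-- Cover lemma modulo a vector. -/
theorem exists_theta (S : Finset Q) (lam : Q)
    (h : ∀ U : Submodule (ZMod 2) Q, lam ∈ U →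
      (S.filter (fun x => x ∈ U)).card + 3 * dm (span (ZMod 2) {lam}) ≤ 3 * dm U) :
    ∃ θ : Q →ₗ[ZMod 2] (Fin 3 → ZMod 2), θ lam = 0 ∧ ∀ x ∈ S, θ x ≠ 0 := by
  have hsing : dms {lam} = dm (span (ZMod 2) {lam}) := by simp [dms]
  obtain ⟨c, hc⟩ := cover _ S rfl (fun _ B => dms ({lam} ∪ B) - dms {lam})
    (fun i => rk_lin.contract {lam}) (by
    intro A hA
    have h1 := h (span (ZMod 2) (({lam} ∪ A : Finset Q) : Set Q)) (subset_span (by simp))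
    have h2 : A.card ≤ (S.filter (fun x => x ∈ span (ZMod 2) (({lam} ∪ A : Finset Q) : Set Q))).card := by
      apply Finset.card_le_card
      intro x hx
      rw [Finset.mem_filter]
      exact ⟨hA hx, subset_span (by simp [hx])⟩
    simp only [Fin.sum_univ_three]
    rw [← hsing] at h1
    change _ ≤ 3 * dms ({lam} ∪ A) at h1
    omega)
  have key : ∀ i, ∃ l : Q →ₗ[ZMod 2] ZMod 2, l lam = 0 ∧ ∀ x ∈ S, c x = i → l x = 1 := by
    intro i
    have hci := hc i
    set I := S.filter (fun x => c x = i) with hI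
    by_cases hlam : lam = 0
    · subst hlam
      obtain ⟨l, hl⟩ := exists_functional I (by
        refine hci.trans ?_
        refine (Nat.sub_le _ _).trans ?_
        simp [dms]) (fun _ => 1)
      exact ⟨l, by simp, fun x hx hxi => hl x (by simp [hI, hx, hxi])⟩
    · have h1 : dms {lam} = 1 := by rw [hsing]; exact dm_single _ hlam
      have hn : lam ∉ I := by
        intro hmem
        have : {lam} ∪ I = I := by grind
        rw [this, h1] at hci
        have h2 := dms_le I
        have h3 : 0 < I.card := Finset.card_pos.2 ⟨_, hmem⟩
        omega
      obtain ⟨l, hl⟩ := exists_functional ({lam} ∪ I) (by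
        rw [Finset.card_union_of_disjoint (by simpa using hn)]
        simp only [Finset.card_singleton]
        have h4 : dms {lam} ≤ dms ({lam} ∪ I) := rk_lin.mono _ _ (by simp)
        omega) (fun x => if x = lam then 0 else 1)
      refine ⟨l, by simpa using hl lam (by simp), fun x hx hxi => ?_⟩
      have hxI : x ∈ I := by simp [hI, hx, hxi]
      rw [hl x (by simp [hxI]), if_neg]
      rintro rfl; exact hn hxI
  choose l hl0 hl1 using key
  refine ⟨LinearMap.pi l, ?_, ?_⟩
  · ext i; simp [hl0]
  · intro x hx h0
    have := congrFun h0 (c x)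
    simp [hl1 (c x) x hx rfl] at this
end lin
end Pf

namespace Pf
open Module Submodule
set_option linter.unusedSectionVars false
section lin2
variable {Q : Type*} [AddCommGroup Q] [Module (ZMod 2) Q] [FiniteDimensional (ZMod 2) Q]

theorem mem_span_one {x l : Q} (h : x ∈ span (ZMod 2) {l}) : x = 0 ∨ x = l := by
  rw [mem_span_singleton] at h
  obtain ⟨a, rfl⟩ := h
  have : a = 0 ∨ a = 1 := by revert a; decide
  rcases this with rfl | rfl <;> simp

theorem eq_span_of_dm {U : Submodule (ZMod 2) Q} {l : Q} (hl : l ∈ U) (h0 : l ≠ 0)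
    (h : dm U ≤ 1) : U = span (ZMod 2) {l} := by
  symm
  apply Submodule.eq_of_le_of_finrank_le
  · simpa using hl
  · have := dm_single l h0
    unfold dm at *; omega

theorem dm_pos {U : Submodule (ZMod 2) Q} {l : Q} (hl : l ∈ U) (h0 : l ≠ 0) : 1 ≤ dm U := by
  rw [← dm_single l h0]; exact dm_mono (by simpa using hl)

theorem dm_zero {U : Submodule (ZMod 2) Q} (h : dm U = 0) (x : Q) (hx : x ∈ U) : x = 0 := by
  by_contra h0
  have := dm_pos hx h0
  omega

open scoped Classical in
theorem star_ext {S : Finset Q} (star : ∀ U : Submodule (ZMod 2) Q, 2 ≤ dm U →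
      (S.filter (fun x => x ∈ U)).card + 3 ≤ 3 * dm U) {U W : Submodule (ZMod 2) Q}
    (hU : 2 ≤ dm U) (hUW : U ≤ W) (T : Finset Q) (hT : ∀ x ∈ T, x ∈ S ∧ x ∈ W ∧ x ∉ U) :
    (S.filter (fun x => x ∈ U)).card + T.card + 3 ≤ 3 * dm W := by
  have h1 := star W (hU.trans (dm_mono hUW))
  have h2 : (S.filter (fun x => x ∈ U)) ∪ T ⊆ S.filter (fun x => x ∈ W) := by
    intro x hx
    simp only [Finset.mem_union, Finset.mem_filter] at hx ⊢
    rcases hx with hx | hx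
    · exact ⟨hx.1, hUW hx.2⟩
    · exact ⟨(hT x hx).1, (hT x hx).2.1⟩
  have h3 := Finset.card_le_card h2
  rw [Finset.card_union_of_disjoint] at h3
  · omega
  · rw [Finset.disjoint_left]
    intro x hx hx2
    exact (hT x hx2).2.2 (Finset.mem_filter.1 hx).2

open scoped Classical in
theorem alg_core (S : Finset Q) (h0 : (0 : Q) ∉ S)
    (star : ∀ U : Submodule (ZMod 2) Q, 2 ≤ dm U →
      (S.filter (fun x => x ∈ U)).card + 3 ≤ 3 * dm U)
    (e0 e1 e2 f1 f2 g1 g2 : Q) (he0 : e0 ∈ S) (he1 : e1 ∈ S) (he2 : e2 ∈ S) (hf1 : f1 ∈ S)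
    (hf2 : f2 ∈ S) (hg1 : g1 ∈ S) (hg2 : g2 ∈ S) (he : e0 = e1 + e2) (hf : e1 = f1 + f2)
    (hg : e2 = g1 + g2) (nf1 : f1 ≠ e0) (nf2 : f2 ≠ e0) (ng1 : g1 ≠ e0) (ng2 : g2 ≠ e0)
    (hl0 : f1 + g1 ≠ 0) (hlS : f1 + g1 ∉ S) :
    ∃ θ : Q →ₗ[ZMod 2] (Fin 3 → ZMod 2), (∀ x ∈ S, θ x ≠ 0) ∧ θ f1 = θ g1 ∧ θ f1 ≠ θ e0 := by
  have df1 := ZModModule.add_self f1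
  have df2 := ZModModule.add_self f2
  have dg1 := ZModModule.add_self g1
  have dg2 := ZModModule.add_self g2
  have ne : ∀ x ∈ S, x ≠ 0 := fun x hx h => h0 (h ▸ hx)
  have n0 := ne _ he0
  have n1 := ne _ he1
  have n2 := ne _ he2
  have m1 := ne _ hf1
  have m2 := ne _ hf2
  have m3 := ne _ hg1
  have m4 := ne _ hg2
  have l0 : f1 + g1 ≠ e0 := fun h => hlS (h ▸ he0)
  have l1 : f1 + g1 ≠ e1 := fun h => hlS (h ▸ he1)
  have l2 : f1 + g1 ≠ e2 := fun h => hlS (h ▸ he2)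
  obtain ⟨θ, ht0, ht⟩ := exists_theta (insert (e0 + f1) (S.erase g1)) (f1 + g1) (by
    intro U hU
    rw [dm_single _ hl0]
    have h1 := dm_pos hU hl0
    by_cases h2 : dm U ≤ 1
    · have hUe := eq_span_of_dm hU hl0 h2
      have : (insert (e0 + f1) (S.erase g1)).filter (fun x => x ∈ U) = ∅ := by
        apply Finset.filter_eq_empty_iff.2
        intro x hx hxU
        rw [hUe] at hxU
        have hx2 := mem_span_one hxU
        rw [Finset.mem_insert, Finset.mem_erase] at hx
        clear star hUe hxU h1 h2 hU
        rcases hx with hx | hx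
        · subst hx
          rcases hx2 with hx2 | hx2
          · grind
          · rw [add_comm, add_right_inj] at hx2
            exact ng1 hx2.symm
        · grind
      rw [this]; simp; omega
    · have hd : 2 ≤ dm U := by omega
      have hs := star U hd
      by_cases hef : e0 + f1 ∈ U
      · by_cases hfU : f1 ∈ U
        · have hgU : g1 ∈ U := by
            have := U.add_mem hU hfU
            have e : f1 + g1 + f1 = g1 := by grind
            rwa [e] at this
          have : (insert (e0 + f1) (S.erase g1)).filter (fun x => x ∈ U) ⊆
              insert (e0 + f1) ((S.filter (fun x => x ∈ U)).erase g1) := by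
            intro x hx
            simp only [Finset.mem_filter, Finset.mem_insert, Finset.mem_erase] at hx ⊢
            tauto
          have h3 := Finset.card_le_card this
          have h4 := Finset.card_insert_le (e0 + f1) ((S.filter (fun x => x ∈ U)).erase g1)
          have h5 : g1 ∈ S.filter (fun x => x ∈ U) := Finset.mem_filter.2 ⟨hg1, hgU⟩
          rw [Finset.card_erase_of_mem h5] at h4
          have h6 := Finset.card_pos.2 ⟨_, h5⟩
          omega
        · have hgoal : (S.filter (fun x => x ∈ U)).card + 4 ≤ 3 * dm U →
            ((insert (e0 + f1) (S.erase g1)).filter (fun x => x ∈ U)).card + 3 * 1 ≤ 3 * dm U := by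
            intro h
            have : (insert (e0 + f1) (S.erase g1)).filter (fun x => x ∈ U) ⊆
              insert (e0 + f1) (S.filter (fun x => x ∈ U)) := by
              intro x hx
              simp only [Finset.mem_filter, Finset.mem_insert, Finset.mem_erase] at hx ⊢
              tauto
            have h3 := Finset.card_le_card this
            have h4 := Finset.card_insert_le (e0 + f1) (S.filter (fun x => x ∈ U))
            omega
          apply hgoal
          have add : ∀ a b c : Q, a ∈ U → b ∈ U → c = a + b → c ∈ U := by
            intro a b c ha hb hc; rw [hc]; exact U.add_mem ha hb
          have heU : e0 ∉ U := fun h => hfU (add _ _ _ hef h (by grind))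
          have hgU : g1 ∉ U := fun h => hfU (add _ _ _ hU h (by grind))
          by_cases h1U : e1 ∈ U
          · have h2U : e2 ∉ U := fun h => heU (add _ _ _ h1U h (by grind))
            set W := U ⊔ span (ZMod 2) {e0} with hW
            have hWd : dm W ≤ dm U + 1 := (dm_sup_le _ _).trans (by have := dm_single_le e0; omega)
            have hUW : U ≤ W := le_sup_left
            have w0 : e0 ∈ W := (le_sup_right : _ ≤ W) (by simp)
            have addW : ∀ a b c : Q, a ∈ W → b ∈ W → c = a + b → c ∈ W := by
              intro a b c ha hb hc; rw [hc]; exact W.add_mem ha hb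
            have w1 : f1 ∈ W := addW _ _ _ w0 (hUW hef) (by grind)
            have w2 : g1 ∈ W := addW _ _ _ w1 (hUW hU) (by grind)
            have w3 : e2 ∈ W := addW _ _ _ w0 (hUW h1U) (by grind)
            have h7 := star_ext star hd hUW {e0, f1, g1, e2} (by
              intro x hx
              simp only [Finset.mem_insert, Finset.mem_singleton] at hx
              rcases hx with rfl | rfl | rfl | rfl <;> exact ⟨‹_›, ‹_›, ‹_›⟩)
            have h8 : ({e0, f1, g1, e2} : Finset Q).card = 4 := by
              clear h7 add addW star hW hgoal
              have : e0 ≠ f1 := by grind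
              have : e0 ≠ g1 := by grind
              have : e0 ≠ e2 := by grind
              have : f1 ≠ g1 := by grind
              have : f1 ≠ e2 := by grind
              have : g1 ≠ e2 := by grind
              rw [Finset.card_insert_of_notMem, Finset.card_insert_of_notMem,
                Finset.card_insert_of_notMem, Finset.card_singleton] <;>
              simp only [Finset.mem_insert, Finset.mem_singleton, not_or] <;> grind only
            omega
          by_cases h2U : e2 ∈ U
          · set W := U ⊔ span (ZMod 2) {e0} with hW
            have hWd : dm W ≤ dm U + 1 := (dm_sup_le _ _).trans (by have := dm_single_le e0; omega)
            have hUW : U ≤ W := le_sup_left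
            have w0 : e0 ∈ W := (le_sup_right : _ ≤ W) (by simp)
            have addW : ∀ a b c : Q, a ∈ W → b ∈ W → c = a + b → c ∈ W := by
              intro a b c ha hb hc; rw [hc]; exact W.add_mem ha hb
            have w1 : f1 ∈ W := addW _ _ _ w0 (hUW hef) (by grind)
            have w2 : g1 ∈ W := addW _ _ _ w1 (hUW hU) (by grind)
            have w3 : e1 ∈ W := addW _ _ _ w0 (hUW h2U) (by grind)
            have h7 := star_ext star hd hUW {e0, f1, g1, e1} (by
              intro x hx
              simp only [Finset.mem_insert, Finset.mem_singleton] at hx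
              rcases hx with rfl | rfl | rfl | rfl <;> exact ⟨‹_›, ‹_›, ‹_›⟩)
            have h8 : ({e0, f1, g1, e1} : Finset Q).card = 4 := by
              clear h7 add addW star hW hgoal
              have : e0 ≠ f1 := by grind
              have : e0 ≠ g1 := by grind
              have : e0 ≠ e1 := by grind
              have : f1 ≠ g1 := by grind
              have : f1 ≠ e1 := by grind
              have : g1 ≠ e1 := by grind
              rw [Finset.card_insert_of_notMem, Finset.card_insert_of_notMem,
                Finset.card_insert_of_notMem, Finset.card_singleton] <;>
              simp only [Finset.mem_insert, Finset.mem_singleton, not_or] <;> grind only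
            omega
          · set W := (U ⊔ span (ZMod 2) {e0}) ⊔ span (ZMod 2) {e1} with hW
            have hWd : dm W ≤ dm U + 2 := by
              have a1 := dm_sup_le (U ⊔ span (ZMod 2) {e0}) (span (ZMod 2) {e1})
              have a2 := dm_sup_le U (span (ZMod 2) {e0})
              have := dm_single_le e0
              have := dm_single_le e1
              rw [hW]
              omega
            have hUW : U ≤ W := le_sup_left.trans le_sup_left
            have w0 : e0 ∈ W := (le_sup_right.trans le_sup_left : _ ≤ W) (mem_span_singleton_self e0)
            have w1 : e1 ∈ W := (le_sup_right : _ ≤ W) (mem_span_singleton_self e1)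
            have addW : ∀ a b c : Q, a ∈ W → b ∈ W → c = a + b → c ∈ W := by
              intro a b c ha hb hc; rw [hc]; exact W.add_mem ha hb
            have w2 : e2 ∈ W := addW _ _ _ w0 w1 (by grind)
            have w3 : f1 ∈ W := addW _ _ _ w0 (hUW hef) (by grind)
            have w4 : g1 ∈ W := addW _ _ _ w3 (hUW hU) (by grind)
            have w5 : f2 ∈ W := addW _ _ _ w3 w1 (by grind)
            have w6 : g2 ∈ W := addW _ _ _ w4 w2 (by grind)
            have u5 : f2 ∉ U := fun h => h2U (add _ _ _ h hef (by grind))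
            have u6 : g2 ∉ U := by
              intro h
              have : e0 + g1 ∈ U := add _ _ _ hef hU (by grind)
              exact h1U (add _ _ _ h this (by grind))
            have h7 := star_ext star hd hUW {e0, e1, e2, f1, f2, g1, g2} (by
              intro x hx
              simp only [Finset.mem_insert, Finset.mem_singleton] at hx
              rcases hx with rfl | rfl | rfl | rfl | rfl | rfl | rfl <;> exact ⟨‹_›, ‹_›, ‹_›⟩)
            have h8 : ({e0, e1, e2, f1, f2, g1, g2} : Finset Q).card = 7 := by
              have x1 : f1 ≠ e2 := by
                intro h
                exact h1U (add _ _ _ hef U.zero_mem (by grind))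
              have x2 : g1 ≠ e1 := by
                intro h
                exact h2U (add _ _ _ hef hU (by grind))
              clear h7 add addW star hW hgoal
              have : e0 ≠ e1 := by grind
              have : e0 ≠ e2 := by grind
              have : e1 ≠ e2 := by grind
              have : e1 ≠ f1 := by grind
              have : e1 ≠ f2 := by grind
              have : e1 ≠ g2 := by grind
              have : e2 ≠ f2 := by grind
              have : e2 ≠ g1 := by grind
              have : e2 ≠ g2 := by grind
              have : f1 ≠ f2 := by grind
              have : f1 ≠ g1 := by grind
              have : f1 ≠ g2 := by grind
              have : f2 ≠ g1 := by grind
              have : f2 ≠ g2 := by grind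
              have : g1 ≠ g2 := by grind
              rw [Finset.card_insert_of_notMem, Finset.card_insert_of_notMem,
                Finset.card_insert_of_notMem, Finset.card_insert_of_notMem,
                Finset.card_insert_of_notMem, Finset.card_insert_of_notMem,
                Finset.card_singleton] <;>
              simp only [Finset.mem_insert, Finset.mem_singleton, not_or] <;> grind only
            omega
      · have : (insert (e0 + f1) (S.erase g1)).filter (fun x => x ∈ U) ⊆
            S.filter (fun x => x ∈ U) := by
          intro x hx
          simp only [Finset.mem_filter, Finset.mem_insert, Finset.mem_erase] at hx ⊢
          rcases hx with ⟨rfl | hx, hx2⟩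
          · exact absurd hx2 hef
          · exact ⟨hx.2, hx2⟩
        have h3 := Finset.card_le_card this
        omega)
  have hfg : θ f1 = θ g1 := by
    rw [map_add] at ht0
    have := ZModModule.add_self (θ g1)
    grind
  have hne : f1 ≠ g1 := by grind
  refine ⟨θ, ?_, hfg, ?_⟩
  · intro x hx
    by_cases hxg : x = g1
    · rw [hxg, ← hfg]; apply ht; simp [hf1, hne]
    · apply ht; simp [hx, hxg]
  · intro h
    have h3 := ht (e0 + f1) (by simp)
    rw [map_add, h] at h3
    exact h3 (ZModModule.add_self _)

open scoped Classical in
theorem alg_eq (S : Finset Q) (h0 : (0 : Q) ∉ S)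
    (star : ∀ U : Submodule (ZMod 2) Q, 2 ≤ dm U →
      (S.filter (fun x => x ∈ U)).card + 3 ≤ 3 * dm U)
    (e0 f : Q) (nf : f ≠ e0) :
    ∃ θ : Q →ₗ[ZMod 2] (Fin 3 → ZMod 2), (∀ x ∈ S, θ x ≠ 0) ∧ θ f ≠ θ e0 := by
  have hs : e0 + f ≠ 0 := by
    intro h
    apply nf
    rw [← add_right_inj e0, h, ZModModule.add_self]
  obtain ⟨θ, ht0, ht⟩ := exists_theta (insert (e0 + f) S) 0 (by
    intro U hU
    have hz : dm (span (ZMod 2) {(0 : Q)}) = 0 := by simp [dm]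
    rw [hz]
    have hsub : (insert (e0 + f) S).filter (fun x => x ∈ U) ⊆
        insert (e0 + f) (S.filter (fun x => x ∈ U)) := by
      intro x hx
      simp only [Finset.mem_filter, Finset.mem_insert] at hx ⊢
      tauto
    have h3 := (Finset.card_le_card hsub).trans (Finset.card_insert_le _ _)
    by_cases h2 : 2 ≤ dm U
    · have := star U h2
      omega
    by_cases h1 : dm U = 0
    · have : (insert (e0 + f) S).filter (fun x => x ∈ U) = ∅ := by
        apply Finset.filter_eq_empty_iff.2
        intro x hx hxU
        have := dm_zero h1 x hxU
        subst this
        rcases Finset.mem_insert.1 hx with h | h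
        · exact hs h.symm
        · exact h0 h
      rw [this]; simp
    · have : (S.filter (fun x => x ∈ U)).card ≤ 1 := by
        rw [Finset.card_le_one]
        intro a ha b hb
        rw [Finset.mem_filter] at ha hb
        have ha0 : a ≠ 0 := fun h => h0 (h ▸ ha.1)
        have hb0 : b ≠ 0 := fun h => h0 (h ▸ hb.1)
        have hUe := eq_span_of_dm ha.2 ha0 (by omega)
        have := hb.2
        rw [hUe] at this
        rcases mem_span_one this with h | h
        · exact absurd h hb0
        · exact h.symm
      omega)
  refine ⟨θ, fun x hx => ht x (by simp [hx]), fun h => ?_⟩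
  have h3 := ht (e0 + f) (by simp)
  rw [map_add, h] at h3
  exact h3 (ZModModule.add_self _)

open scoped Classical in
theorem alg (S : Finset Q) (h0 : (0 : Q) ∉ S)
    (star : ∀ U : Submodule (ZMod 2) Q, 2 ≤ dm U →
      (S.filter (fun x => x ∈ U)).card + 3 ≤ 3 * dm U)
    (e0 e1 e2 f1 f2 g1 g2 : Q) (he0 : e0 ∈ S) (he1 : e1 ∈ S) (he2 : e2 ∈ S) (hf1 : f1 ∈ S)
    (hf2 : f2 ∈ S) (hg1 : g1 ∈ S) (hg2 : g2 ∈ S) (he : e0 = e1 + e2) (hf : e1 = f1 + f2)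
    (hg : e2 = g1 + g2) (nf1 : f1 ≠ e0) (nf2 : f2 ≠ e0) (ng1 : g1 ≠ e0) (ng2 : g2 ≠ e0) :
    ∃ θ : Q →ₗ[ZMod 2] (Fin 3 → ZMod 2), (∀ x ∈ S, θ x ≠ 0) ∧
      ∃ f g, (f = f1 ∨ f = f2) ∧ (g = g1 ∨ g = g2) ∧ θ f = θ g ∧ θ f ≠ θ e0 := by
  by_cases hfg : f1 = g1 ∨ f1 = g2 ∨ f2 = g1 ∨ f2 = g2
  · have key : ∀ f g, f = g → (f = f1 ∨ f = f2) → (g = g1 ∨ g = g2) → f ≠ e0 →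
      ∃ θ : Q →ₗ[ZMod 2] (Fin 3 → ZMod 2), (∀ x ∈ S, θ x ≠ 0) ∧
      ∃ f g, (f = f1 ∨ f = f2) ∧ (g = g1 ∨ g = g2) ∧ θ f = θ g ∧ θ f ≠ θ e0 := by
      intro f g h hf hg hn
      obtain ⟨θ, h1, h2⟩ := alg_eq S h0 star e0 f hn
      exact ⟨θ, h1, f, g, hf, hg, by rw [h], h2⟩
    rcases hfg with h | h | h | h
    · exact key _ _ h (by simp) (by simp) nf1
    · exact key _ _ h (by simp) (by simp) nf1
    · exact key _ _ h (by simp) (by simp) nf2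
    · exact key _ _ h (by simp) (by simp) nf2
  push Not at hfg
  have nz : ∀ a b : Q, a ≠ b → a + b ≠ 0 := by
    intro a b h h2
    apply h
    rw [← add_left_inj b, h2, ZModModule.add_self]
  have hf' : e1 = f2 + f1 := by rw [hf, add_comm]
  have hg' : e2 = g2 + g1 := by rw [hg, add_comm]
  by_cases c1 : f1 + g1 ∈ S
  swap
  · obtain ⟨θ, h1, h2, h3⟩ := alg_core S h0 star e0 e1 e2 f1 f2 g1 g2 he0 he1 he2 hf1 hf2 hg1 hg2
      he hf hg nf1 nf2 ng1 ng2 (nz _ _ hfg.1) c1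
    exact ⟨θ, h1, f1, g1, by simp, by simp, h2, h3⟩
  by_cases c2 : f1 + g2 ∈ S
  swap
  · obtain ⟨θ, h1, h2, h3⟩ := alg_core S h0 star e0 e1 e2 f1 f2 g2 g1 he0 he1 he2 hf1 hf2 hg2 hg1
      he hf hg' nf1 nf2 ng2 ng1 (nz _ _ hfg.2.1) c2
    exact ⟨θ, h1, f1, g2, by simp, by simp, h2, h3⟩
  by_cases c3 : f2 + g1 ∈ S
  swap
  · obtain ⟨θ, h1, h2, h3⟩ := alg_core S h0 star e0 e1 e2 f2 f1 g1 g2 he0 he1 he2 hf2 hf1 hg1 hg2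
      he hf' hg nf2 nf1 ng1 ng2 (nz _ _ hfg.2.2.1) c3
    exact ⟨θ, h1, f2, g1, by simp, by simp, h2, h3⟩
  by_cases c4 : f2 + g2 ∈ S
  swap
  · obtain ⟨θ, h1, h2, h3⟩ := alg_core S h0 star e0 e1 e2 f2 f1 g2 g1 he0 he1 he2 hf2 hf1 hg2 hg1
      he hf' hg' nf2 nf1 ng2 ng1 (nz _ _ hfg.2.2.2) c4
    exact ⟨θ, h1, f2, g2, by simp, by simp, h2, h3⟩
  exfalso
  have df1 := ZModModule.add_self f1
  have df2 := ZModModule.add_self f2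
  have dg1 := ZModModule.add_self g1
  have dg2 := ZModModule.add_self g2
  have ne : ∀ x ∈ S, x ≠ 0 := fun x hx h => h0 (h ▸ hx)
  have n0 := ne _ he0
  have n1 := ne _ he1
  have n2 := ne _ he2
  have z1 := nz _ _ hfg.1
  have z2 := nz _ _ hfg.2.1
  have z3 := nz _ _ hfg.2.2.1
  have z4 := nz _ _ hfg.2.2.2
  set U := (span (ZMod 2) {e1} ⊔ span (ZMod 2) {e2}) ⊔ span (ZMod 2) {f1 + g1} with hU
  have hUd : dm U ≤ 3 := by
    have a1 := dm_sup_le (span (ZMod 2) {e1} ⊔ span (ZMod 2) {e2}) (span (ZMod 2) {f1 + g1})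
    have a2 := dm_sup_le (span (ZMod 2) {e1}) (span (ZMod 2) {e2})
    have := dm_single_le e1
    have := dm_single_le e2
    have := dm_single_le (f1 + g1)
    rw [hU]
    omega
  have u1 : e1 ∈ U := (le_sup_left.trans le_sup_left : _ ≤ U) (mem_span_singleton_self e1)
  have u2 : e2 ∈ U := (le_sup_right.trans le_sup_left : _ ≤ U) (mem_span_singleton_self e2)
  have u3 : f1 + g1 ∈ U := (le_sup_right : _ ≤ U) (mem_span_singleton_self _)
  have add : ∀ a b c : Q, a ∈ U → b ∈ U → c = a + b → c ∈ U := by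
    intro a b c ha hb hc; rw [hc]; exact U.add_mem ha hb
  have u0 : e0 ∈ U := add _ _ _ u1 u2 he
  have u4 : f1 + g2 ∈ U := add _ _ _ u2 u3 (by grind)
  have u5 : f2 + g1 ∈ U := add _ _ _ u1 u3 (by grind)
  have u6 : f2 + g2 ∈ U := add _ _ _ u2 u5 (by grind)
  have hU2 : 2 ≤ dm U := by
    by_contra hlt
    have hUe := eq_span_of_dm u1 n1 (by omega)
    have := u2
    rw [hUe] at this
    rcases mem_span_one this with h | h
    · exact n2 h
    · grind
  have h7 : ({e0, e1, e2, f1 + g1, f1 + g2, f2 + g1, f2 + g2} : Finset Q).card ≤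
      (S.filter (fun x => x ∈ U)).card := by
    apply Finset.card_le_card
    intro x hx
    simp only [Finset.mem_insert, Finset.mem_singleton] at hx
    rw [Finset.mem_filter]
    rcases hx with rfl | rfl | rfl | rfl | rfl | rfl | rfl <;> exact ⟨‹_›, ‹_›⟩
  have h8 : ({e0, e1, e2, f1 + g1, f1 + g2, f2 + g1, f2 + g2} : Finset Q).card = 7 := by
    clear h7 add star hU
    have : e0 ≠ e1 := by grind
    have : e0 ≠ e2 := by grind
    have : e1 ≠ e2 := by grind
    generalize hA : f1 + g1 = A at *
    generalize hB : f1 + g2 = B at *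
    generalize hC : f2 + g1 = C at *
    generalize hD : f2 + g2 = D at *
    have : e0 ≠ A := by grind
    have : e0 ≠ B := by grind
    have : e0 ≠ C := by grind
    have : e0 ≠ D := by grind
    have : e1 ≠ A := by grind
    have : e1 ≠ B := by grind
    have : e1 ≠ C := by grind
    have : e1 ≠ D := by grind
    have : e2 ≠ A := by grind
    have : e2 ≠ B := by grind
    have : e2 ≠ C := by grind
    have : e2 ≠ D := by grind
    have : A ≠ B := by grind
    have : A ≠ C := by grind
    have : A ≠ D := by grind
    have : B ≠ C := by grind
    have : B ≠ D := by grind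
    have : C ≠ D := by grind
    rw [Finset.card_insert_of_notMem, Finset.card_insert_of_notMem,
      Finset.card_insert_of_notMem, Finset.card_insert_of_notMem,
      Finset.card_insert_of_notMem, Finset.card_insert_of_notMem,
      Finset.card_singleton] <;>
      simp only [Finset.mem_insert, Finset.mem_singleton, not_or] <;> grind only
  have := star U hU2
  omega
end lin2
end Pf

namespace Pf
open Module Submodule
set_option linter.unusedSectionVars false
section gr
variable {E V : Type*} [Fintype E] [Fintype V] [DecidableEq E] (a b : E → V)

/-- coboundary -/
def dl : (V → ZMod 2) →ₗ[ZMod 2] (E → ZMod 2) where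
  toFun f e := f (a e) + f (b e)
  map_add' f g := by ext e; simp; abel
  map_smul' c f := by ext e; simp [mul_add]

/-- edges modulo cuts -/
abbrev QQ : Type _ := (E → ZMod 2) ⧸ LinearMap.range (dl a b)

/-- class of an edge -/
def cls (e : E) : QQ a b := Submodule.Quotient.mk (Pi.single e 1)

theorem mk_eq_sum (h : E → ZMod 2) : (Submodule.Quotient.mk h : QQ a b) = ∑ e, h e • cls a b e := by
  conv_lhs => rw [pi_eq_sum_univ' h]
  rw [← Submodule.mkQ_apply, map_sum]
  apply Finset.sum_congr rfl
  intro e _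
  rw [map_smul]
  congr 2

theorem zmod2 (x : ZMod 2) : x = 0 ∨ x = 1 := by revert x; decide

theorem mk_eq_sum_supp (h : E → ZMod 2) : (Submodule.Quotient.mk h : QQ a b) =
    ∑ e with h e ≠ 0, cls a b e := by
  rw [mk_eq_sum, Finset.sum_filter]
  apply Finset.sum_congr rfl
  intro e _
  rcases zmod2 (h e) with h | h <;> simp [h]

open scoped Classical in
theorem ker_bound (hne : ∀ e, cls a b e ≠ 0) (A : Finset E)
    (hA : ∀ e ∈ A, ∀ e' ∈ A, cls a b e = cls a b e' → e = e')
    (L : (A → ZMod 2) →ₗ[ZMod 2] QQ a b) (hL : ∀ h, L h = ∑ e, h e • cls a b e.1)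
    (hk : 1 ≤ finrank (ZMod 2) (LinearMap.ker L)) :
    3 * (finrank (ZMod 2) (LinearMap.ker L) + 1) ≤ 2 * A.card := by
  let N : Set (V → ZMod 2) := {f | ∀ e, e ∉ A → f (a e) = f (b e)}
  let st : Setoid V := ⟨fun x y => ∀ f ∈ N, f x = f y, fun x f _ => rfl,
    fun h f hf => (h f hf).symm, fun h h' f hf => (h f hf).trans (h' f hf)⟩
  let C := Quotient st
  let q : V → C := Quotient.mk st
  have hq : ∀ x y, q x = q y ↔ ∀ f ∈ N, f x = f y := fun x y => Quotient.eq (r := st)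
  let ind : C → V → ZMod 2 := fun X x => if q x = X then 1 else 0
  have hind : ∀ X, ind X ∈ N := by
    intro X e he
    have : q (a e) = q (b e) := by
      rw [hq]; intro f hf; exact hf e he
    simp only [ind, this]
  let R : (V → ZMod 2) → (A → ZMod 2) := fun f e => dl a b f e.1
  let D : C → (A → ZMod 2) := fun X => R (ind X)
  have hsupp : ∀ f ∈ N, ∀ e, e ∉ A → dl a b f e = 0 := by
    intro f hf e he
    have := hf e he
    simp only [dl, LinearMap.coe_mk, AddHom.coe_mk, this]
    exact ZModModule.add_self _
  -- kernel is spanned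
  have hker : ∀ h, L h = 0 → ∃ f ∈ N, h = R f := by
    intro h hh
    let h' : E → ZMod 2 := fun e => if he : e ∈ A then h ⟨e, he⟩ else 0
    have h1 : (Submodule.Quotient.mk h' : QQ a b) = 0 := by
      rw [← hh, hL, mk_eq_sum]
      rw [← Finset.sum_subset (Finset.subset_univ A)]
      · rw [← Finset.sum_coe_sort]
        apply Finset.sum_congr rfl
        intro e _
        simp [h']
      · intro e _ he
        simp [h', he]
    rw [Submodule.Quotient.mk_eq_zero] at h1
    obtain ⟨f, hf⟩ := h1
    refine ⟨f, ?_, ?_⟩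
    · intro e he
      have := congrFun hf e
      simp only [dl, LinearMap.coe_mk, AddHom.coe_mk, h', he, dite_false] at this
      rw [← add_left_inj (f (b e)), this, ZModModule.add_self]
    · ext e
      simp only [R, hf]
      simp [h']
  have hdec : ∀ f ∈ N, R f = ∑ X, f X.out • D X := by
    intro f hf
    have : f = ∑ X, f X.out • ind X := by
      ext x
      rw [Finset.sum_apply, Finset.sum_eq_single (q x)]
      · simp only [ind, Pi.smul_apply, if_true, smul_eq_mul, mul_one]
        have : q (q x).out = q x := Quotient.out_eq _
        exact ((hq _ _).1 this f hf).symm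
      · intro X _ hX
        simp [ind, hX.symm]
      · simp
    ext e
    conv_lhs => simp only [R]; rw [this]
    rw [map_sum]
    simp [D, R]
  let C' : Finset C := Finset.univ.filter (fun X => D X ≠ 0)
  have hsum : ∑ X ∈ C', D X = 0 := by
    have h1 := hdec (fun _ => 1) (fun e _ => rfl)
    have h2 : R (fun _ => 1) = 0 := by
      ext e; simp only [R, dl, LinearMap.coe_mk, AddHom.coe_mk]; rfl
    rw [h2] at h1
    rw [Finset.sum_filter_ne_zero, h1]
    simp
  have hspan : ∀ X0 ∈ C', LinearMap.ker L ≤ span (ZMod 2) (((C'.erase X0).image D : Finset _) : Set (A → ZMod 2)) := by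
    intro X0 hX0 h hh
    obtain ⟨f, hf, rfl⟩ := hker h hh
    rw [hdec f hf]
    have hmem : ∀ X ∈ C'.erase X0, D X ∈ span (ZMod 2) (((C'.erase X0).image D : Finset _) : Set (A → ZMod 2)) :=
      fun X hX => subset_span (by exact_mod_cast Finset.mem_image_of_mem D hX)
    apply sum_mem
    intro X _
    apply smul_mem
    by_cases hX : X ∈ C'
    · by_cases hX2 : X = X0
      · subst hX2
        rw [← Finset.add_sum_erase _ _ hX] at hsum
        have : D X = ∑ X ∈ C'.erase X, D X := by
          rw [← add_left_inj (∑ X ∈ C'.erase X, D X), hsum, ZModModule.add_self]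
        rw [this]
        exact sum_mem hmem
      · exact hmem X (Finset.mem_erase.2 ⟨hX2, hX⟩)
    · have : D X = 0 := by simpa [C'] using hX
      rw [this]; exact zero_mem _
  have hC' : C'.Nonempty := by
    by_contra hc
    rw [Finset.not_nonempty_iff_eq_empty] at hc
    have : LinearMap.ker L = ⊥ := by
      rw [eq_bot_iff]
      intro h hh
      obtain ⟨f, hf, rfl⟩ := hker h hh
      rw [hdec f hf]
      rw [mem_bot]
      apply Finset.sum_eq_zero
      intro X _
      have : X ∉ C' := by simp [hc]
      have : D X = 0 := by simpa [C'] using this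
      simp [this]
    rw [this] at hk
    simp at hk
  have hkC : finrank (ZMod 2) (LinearMap.ker L) + 1 ≤ C'.card := by
    obtain ⟨X0, hX0⟩ := hC'
    have h1 := Submodule.finrank_mono (hspan X0 hX0)
    have h2 := finrank_span_finset_le_card (R := ZMod 2) ((C'.erase X0).image D)
    have h3 := Finset.card_image_le (s := C'.erase X0) (f := D)
    have h4 := Finset.card_erase_add_one hX0
    simp only [Set.finrank] at h2
    omega
  have h3 : ∀ X ∈ C', 3 ≤ (A.filter (fun e => dl a b (ind X) e ≠ 0)).card := by
    intro X hX
    have hXD : D X ≠ 0 := by simpa [C'] using hX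
    have hs : A.filter (fun e => dl a b (ind X) e ≠ 0) =
        Finset.univ.filter (fun e => dl a b (ind X) e ≠ 0) := by
      ext e
      simp only [Finset.mem_filter, Finset.mem_univ, true_and, and_iff_right_iff_imp]
      intro h
      by_contra he
      exact h (hsupp _ (hind X) e he)
    have hz : ∑ e ∈ A with dl a b (ind X) e ≠ 0, cls a b e = 0 := by
      rw [hs, ← mk_eq_sum_supp, Submodule.Quotient.mk_eq_zero]
      exact ⟨_, rfl⟩
    generalize hB : A.filter (fun e => dl a b (ind X) e ≠ 0) = B at hz
    have hBA : B ⊆ A := by rw [← hB]; exact Finset.filter_subset _ _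
    by_contra hlt
    have : B.card = 0 ∨ B.card = 1 ∨ B.card = 2 := by omega
    rcases this with h | h | h
    · rw [Finset.card_eq_zero] at h
      apply hXD
      ext e
      by_contra hne
      have : e.1 ∈ B := by rw [← hB, Finset.mem_filter]; exact ⟨e.2, hne⟩
      simp [h] at this
    · rw [Finset.card_eq_one] at h
      obtain ⟨e, rfl⟩ := h
      simp at hz
      exact hne e hz
    · rw [Finset.card_eq_two] at h
      obtain ⟨e, e', hee, rfl⟩ := h
      rw [Finset.sum_pair hee] at hz
      apply hee
      apply hA e (hBA (by simp)) e' (hBA (by simp))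
      rw [← add_left_inj (cls a b e'), hz, ZModModule.add_self]
  have hdc : ∑ X ∈ C', (A.filter (fun e => dl a b (ind X) e ≠ 0)).card ≤ 2 * A.card := by
    simp only [Finset.card_filter]
    rw [Finset.sum_comm, mul_comm, ← smul_eq_mul, ← Finset.sum_const]
    apply Finset.sum_le_sum
    intro e _
    rw [← Finset.card_filter]
    have : C'.filter (fun X => dl a b (ind X) e ≠ 0) ⊆ {q (a e), q (b e)} := by
      intro X hX
      rw [Finset.mem_filter] at hX
      by_contra hn
      simp only [Finset.mem_insert, Finset.mem_singleton, not_or] at hn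
      apply hX.2
      simp [dl, ind, Ne.symm hn.1, Ne.symm hn.2]
    exact (Finset.card_le_card this).trans Finset.card_le_two
  have h5 := Finset.card_nsmul_le_sum C' _ 3 h3
  simp only [smul_eq_mul] at h5
  omega

open scoped Classical in
theorem dl_star (hne : ∀ e, cls a b e ≠ 0) (U : Submodule (ZMod 2) (QQ a b)) (hU : 2 ≤ dm U) :
    ((Finset.univ.image (cls a b)).filter (fun x => x ∈ U)).card + 3 ≤ 3 * dm U := by
  set T := (Finset.univ.image (cls a b)).filter (fun x => x ∈ U) with hT
  have hg : ∀ x : T, ∃ e, cls a b e = x.1 := by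
    intro x
    obtain ⟨e, _, he⟩ := Finset.mem_image.1 (Finset.mem_filter.1 x.2).1
    exact ⟨e, he⟩
  choose g hg using hg
  have ginj : Function.Injective g := by
    intro x y h
    apply Subtype.ext
    rw [← hg, ← hg, h]
  set A : Finset E := Finset.univ.image g with hA
  have hcard : A.card = T.card := by
    rw [hA, Finset.card_image_of_injective _ ginj]; simp
  have hAU : ∀ e ∈ A, cls a b e ∈ U := by
    intro e he
    rw [hA, Finset.mem_image] at he
    obtain ⟨x, _, rfl⟩ := he
    rw [hg]
    exact (Finset.mem_filter.1 x.2).2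
  have hinj : ∀ e ∈ A, ∀ e' ∈ A, cls a b e = cls a b e' → e = e' := by
    intro e he e' he' h
    rw [hA, Finset.mem_image] at he he'
    obtain ⟨x, _, rfl⟩ := he
    obtain ⟨y, _, rfl⟩ := he'
    rw [hg, hg] at h
    rw [Subtype.ext h]
  let L : (A → ZMod 2) →ₗ[ZMod 2] QQ a b :=
    Fintype.linearCombination (ZMod 2) (fun e : A => cls a b e.1)
  have hL : ∀ h, L h = ∑ e, h e • cls a b e.1 := fun h => Fintype.linearCombination_apply _ _ _
  have h1 := LinearMap.finrank_range_add_finrank_ker L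
  have h2 : finrank (ZMod 2) (LinearMap.range L) ≤ dm U := by
    apply Submodule.finrank_mono
    rintro _ ⟨h, rfl⟩
    rw [hL]
    exact sum_mem fun e _ => smul_mem _ _ (hAU _ e.2)
  have h3 : finrank (ZMod 2) (A → ZMod 2) = A.card := by simp
  by_cases hk : 1 ≤ finrank (ZMod 2) (LinearMap.ker L)
  · have := ker_bound a b hne A hinj L hL hk
    omega
  · omega
end gr
end Pf

namespace Pf
open Module Submodule
set_option linter.unusedSectionVars false
section gr2
variable {V : Type*} [Fintype V] [DecidableEq V] (H : SimpleGraph V)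

/-- F2 flow -/
def IsFl (φ : V → V → ZMod 2) : Prop :=
  (∀ x y, φ x y = φ y x) ∧ (∀ x y, ¬ H.Adj x y → φ x y = 0) ∧ ∀ x, ∑ y, φ x y = 0

/-- each edge in support of a flow -/
def Nice : Prop := ∀ x y, H.Adj x y → ∃ φ, IsFl H φ ∧ φ x y = 1

/-- neighbours of a cubic vertex -/
def Tri (x a b c : V) : Prop := a ≠ b ∧ a ≠ c ∧ b ≠ c ∧ ∀ y, H.Adj x y ↔ y = a ∨ y = b ∨ y = c

variable {H}
theorem Tri.sum {M : Type*} [AddCommMonoid M] {x a b c : V} (h : Tri H x a b c) (g : V → M)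
    (hg : ∀ y, ¬ H.Adj x y → g y = 0) : ∑ y, g y = g a + g b + g c := by
  obtain ⟨hab, hac, hbc, h⟩ := h
  rw [← Finset.sum_subset (Finset.subset_univ {a, b, c})]
  · rw [Finset.sum_insert (by simp [hab, hac]), Finset.sum_pair hbc, add_assoc]
  · intro y _ hy
    apply hg
    rw [h]
    simpa using hy

theorem Tri.perm {x a b c d : V} (h : Tri H x a b c) (hd : H.Adj x d) : ∃ b c, Tri H x d b c := by
  obtain ⟨hab, hac, hbc, h⟩ := h
  rcases (h d).1 hd with rfl | rfl | rfl
  · exact ⟨b, c, hab, hac, hbc, h⟩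
  · exact ⟨a, c, hab.symm, hbc, hac, fun y => by rw [h]; tauto⟩
  · exact ⟨a, b, hac.symm, hbc.symm, hab, fun y => by rw [h]; tauto⟩

theorem Tri.perm2 {x a b c d : V} (h : Tri H x a b c) (hd : H.Adj x d) (hda : d ≠ a) :
    ∃ c, Tri H x a d c := by
  obtain ⟨hab, hac, hbc, h⟩ := h
  rcases (h d).1 hd with rfl | rfl | rfl
  · exact absurd rfl hda
  · exact ⟨c, hab, hac, hbc, h⟩
  · exact ⟨b, hac, hab, hbc.symm, fun y => by rw [h]; tauto⟩

variable (H)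
noncomputable instance : Fintype H.edgeSet := Fintype.ofFinite _

open scoped Classical in
noncomputable instance : DecidableEq H.edgeSet := inferInstance

/-- first end -/
noncomputable def ea (e : H.edgeSet) : V := (Quot.out e.1).1
/-- second end -/
noncomputable def eb (e : H.edgeSet) : V := (Quot.out e.1).2

theorem ends_eq (e : H.edgeSet) : s(ea H e, eb H e) = e.1 := Quot.out_eq e.1

theorem dl_adj (f : V → ZMod 2) {x y : V} (h : H.Adj x y) :
    dl (ea H) (eb H) f ⟨s(x, y), h⟩ = f x + f y := by
  have h1 := ends_eq H ⟨s(x, y), h⟩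
  simp only [dl, LinearMap.coe_mk, AddHom.coe_mk]
  rw [Sym2.eq_iff] at h1
  rcases h1 with ⟨h1, h2⟩ | ⟨h1, h2⟩
  · rw [h1, h2]
  · rw [h1, h2, add_comm]

open scoped Classical in
/-- extend edge function to pairs -/
noncomputable def ext2 {M : Type*} [AddCommMonoid M] (g : H.edgeSet → M) (x y : V) : M :=
  if h : H.Adj x y then g ⟨s(x, y), h⟩ else 0

theorem ext2_symm {M : Type*} [AddCommMonoid M] (g : H.edgeSet → M) (x y : V) :
    ext2 H g x y = ext2 H g y x := by
  unfold ext2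
  by_cases h : H.Adj x y
  · rw [dif_pos h, dif_pos h.symm]
    congr 2
    exact Sym2.eq_swap
  · rw [dif_neg h, dif_neg (fun h' => h h'.symm)]

theorem ext2_adj {M : Type*} [AddCommMonoid M] (g : H.edgeSet → M) {x y : V} (h : H.Adj x y) :
    ext2 H g x y = g ⟨s(x, y), h⟩ := by
  unfold ext2; rw [dif_pos h]

theorem ext2_nadj {M : Type*} [AddCommMonoid M] (g : H.edgeSet → M) {x y : V} (h : ¬ H.Adj x y) :
    ext2 H g x y = 0 := by
  unfold ext2; rw [dif_neg h]

theorem sum_star {M : Type*} [AddCommGroup M] [Module (ZMod 2) M] (g : H.edgeSet → M) (x : V) :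
    ∑ e, dl (ea H) (eb H) (Pi.single x 1) e • g e = ∑ y, ext2 H g x y := by
  classical
  symm
  rw [← Finset.sum_filter_of_ne (p := fun y => H.Adj x y)
    (fun y _ h => by by_contra h2; exact h (ext2_nadj H g h2))]
  rw [← Finset.sum_filter_of_ne (p := fun e : H.edgeSet => x ∈ e.1) (s := Finset.univ (α := H.edgeSet))]
  · refine Finset.sum_bij (fun y hy => ⟨s(x, y), (Finset.mem_filter.1 hy).2⟩) ?_ ?_ ?_ ?_
    · intro y hy; simp
    · intro y hy y' hy' h
      have h2 : s(x, y) = s(x, y') := congrArg Subtype.val h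
      exact Sym2.congr_right.1 h2
    · rintro ⟨e, he⟩ hxe
      rw [Finset.mem_filter] at hxe
      obtain ⟨y, rfl⟩ := Sym2.mem_iff_exists.1 hxe.2
      exact ⟨y, by simpa using he, rfl⟩
    · intro y hy
      have hxy : H.Adj x y := (Finset.mem_filter.1 hy).2
      rw [dl_adj H _ hxy, ext2_adj H g hxy]
      simp [hxy.ne']
  · rintro ⟨e, he⟩ _ h
    by_contra hx
    apply h
    induction e with
    | _ y z =>
    rw [dl_adj H _ he]
    simp only [Sym2.mem_iff, not_or] at hx
    simp [Ne.symm hx.1, Ne.symm hx.2]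

/-- class of a pair -/
noncomputable def K (x y : V) : QQ (ea H) (eb H) := ext2 H (cls (ea H) (eb H)) x y

theorem K_sum (x : V) : ∑ y, K H x y = 0 := by
  unfold K
  rw [← sum_star, ← mk_eq_sum, Submodule.Quotient.mk_eq_zero]
  exact ⟨_, rfl⟩

theorem K_symm (x y : V) : K H x y = K H y x := ext2_symm H _ x y
theorem K_nadj {x y : V} (h : ¬ H.Adj x y) : K H x y = 0 := ext2_nadj H _ h

theorem K_functional (φ : V → V → ZMod 2) (hφ : IsFl H φ) :
    ∃ l : QQ (ea H) (eb H) →ₗ[ZMod 2] ZMod 2, ∀ x y, H.Adj x y → l (K H x y) = φ x y := by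
  let g : H.edgeSet → ZMod 2 := fun e => φ (ea H e) (eb H e)
  have hg : ∀ x y (h : H.Adj x y), g ⟨s(x, y), h⟩ = φ x y := by
    intro x y h
    have h1 := ends_eq H ⟨s(x, y), h⟩
    rw [Sym2.eq_iff] at h1
    simp only [g]
    rcases h1 with ⟨h1, h2⟩ | ⟨h1, h2⟩
    · rw [h1, h2]
    · rw [h1, h2, hφ.1]
  let l0 : (H.edgeSet → ZMod 2) →ₗ[ZMod 2] ZMod 2 := Fintype.linearCombination (ZMod 2) g
  have hl0 : ∀ h, l0 h = ∑ e, h e • g e := fun h => Fintype.linearCombination_apply _ _ _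
  have hker : LinearMap.range (dl (ea H) (eb H)) ≤ LinearMap.ker l0 := by
    rw [LinearMap.range_le_ker_iff]
    apply LinearMap.pi_ext'
    intro x
    ext
    simp only [LinearMap.coe_comp, Function.comp_apply, LinearMap.coe_single, LinearMap.zero_apply]
    rw [hl0, sum_star, ← hφ.2.2 x]
    apply Finset.sum_congr rfl
    intro y _
    by_cases h : H.Adj x y
    · rw [ext2_adj H _ h, hg]
    · rw [ext2_nadj H _ h, hφ.2.1 _ _ h]
  refine ⟨Submodule.liftQ _ l0 hker, ?_⟩
  intro x y h
  unfold K
  rw [ext2_adj H _ h]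
  unfold cls
  rw [Submodule.liftQ_apply, hl0, Finset.sum_eq_single ⟨s(x, y), h⟩]
  · simp [hg x y h]
  · intro e _ he; simp [he]
  · simp

theorem cls_ne (hN : Nice H) (e : H.edgeSet) : cls (ea H) (eb H) e ≠ 0 := by
  obtain ⟨e, he⟩ := e
  induction e with
  | _ x y =>
  obtain ⟨φ, h1, h2⟩ := hN x y he
  obtain ⟨l, hl⟩ := K_functional H φ h1
  intro h
  have := hl x y he
  unfold K at this
  rw [ext2_adj H _ he, h, h2] at this
  simp at this

theorem K_eq_cut {x y x' y' : V} (h : H.Adj x y) (h' : H.Adj x' y') (hK : K H x y = K H x' y') :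
    ∃ f : V → ZMod 2, ∀ p q, H.Adj p q → f p + f q =
      (if s(p, q) = s(x, y) then 1 else 0) + (if s(p, q) = s(x', y') then 1 else 0) := by
  unfold K at hK
  rw [ext2_adj H _ h, ext2_adj H _ h'] at hK
  unfold cls at hK
  rw [Submodule.Quotient.eq] at hK
  obtain ⟨f, hf⟩ := hK
  refine ⟨f, fun p q hpq => ?_⟩
  rw [← dl_adj H f hpq, hf, Pi.sub_apply, ZModModule.sub_eq_add]
  simp only [Pi.single_apply, Subtype.ext_iff]

/-- hypotheses -/
structure Hyp (s u w : V) : Prop where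
  nice : Nice H
  huw : u ≠ w
  hs : ∀ y, H.Adj s y ↔ y = u ∨ y = w
  nuw : ¬ H.Adj u w
  deg : ∀ x, x ≠ s → (∀ y, ¬ H.Adj x y) ∨ ∃ a b c, Tri H x a b c

/-- conclusion -/
def Concl (s : V) : Prop := ∃ (θ : V → V → (Fin 3 → ZMod 2)) (v : Fin 3 → ZMod 2) (p : V),
  v ≠ 0 ∧ p ≠ s ∧ (∀ x y, θ x y = θ y x) ∧ (∀ x y, H.Adj x y → θ x y ≠ 0) ∧
  (∀ x y, ¬ H.Adj x y → θ x y = 0) ∧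
  (∀ x, ∑ y, θ x y = if x = s ∨ x = p then v else 0) ∧
  (∀ y y', H.Adj p y → H.Adj p y' → θ p y = θ p y' → y = y') ∧
  (∀ y, H.Adj p y → y ≠ s → ∃ y', θ y y' = v)

theorem Hyp.tri {s u w x y : V} (h : Hyp H s u w) (hx : x ≠ s) (hxy : H.Adj x y) :
    ∃ b c, Tri H x y b c := by
  rcases h.deg x hx with h1 | ⟨a, b, c, h1⟩
  · exact absurd hxy (h1 y)
  · exact h1.perm hxy
end gr2
end Pf

namespace Pf
open Module Submodule
set_option linter.unusedSectionVars false
section gr3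
variable {V : Type*} [Fintype V] [DecidableEq V] (H : SimpleGraph V)

theorem direct {s u w u1 u2 y1 y2 z1 z2 : V} (h : Hyp H s u w) (hu : Tri H u s u1 u2)
    (h1 : Tri H u1 u y1 y2) (h2 : Tri H u2 u z1 z2)
    (n1 : K H u1 y1 ≠ K H u s) (n2 : K H u1 y2 ≠ K H u s)
    (n3 : K H u2 z1 ≠ K H u s) (n4 : K H u2 z2 ≠ K H u s) : Concl H s := by
  classical
  have hmem : ∀ x y, H.Adj x y → K H x y ∈ Finset.univ.image (cls (ea H) (eb H)) := by
    intro x y hxy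
    unfold K
    rw [ext2_adj H _ hxy]
    exact Finset.mem_image_of_mem _ (Finset.mem_univ _)
  have tsum : ∀ x a b c, Tri H x a b c → K H x a = K H x b + K H x c := by
    intro x a b c ht
    have := K_sum H x
    rw [ht.sum _ (fun y hy => K_nadj H hy)] at this
    rw [← add_left_inj (K H x b + K H x c), ZModModule.add_self, ← add_assoc, this]
  have au1 : H.Adj u u1 := (hu.2.2.2 _).2 (by simp)
  have au2 : H.Adj u u2 := (hu.2.2.2 _).2 (by simp)
  have aus : H.Adj u s := (hu.2.2.2 _).2 (by simp)
  have ay1 : H.Adj u1 y1 := (h1.2.2.2 _).2 (by simp)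
  have ay2 : H.Adj u1 y2 := (h1.2.2.2 _).2 (by simp)
  have az1 : H.Adj u2 z1 := (h2.2.2.2 _).2 (by simp)
  have az2 : H.Adj u2 z2 := (h2.2.2.2 _).2 (by simp)
  have s1 := tsum _ _ _ _ h1
  have s2 := tsum _ _ _ _ h2
  rw [K_symm] at s1 s2
  obtain ⟨Θ, hΘ, f, g, hf, hg, hfg, hne⟩ := alg (Finset.univ.image (cls (ea H) (eb H)))
    (by
      intro h0
      rw [Finset.mem_image] at h0
      obtain ⟨e, _, he⟩ := h0
      exact cls_ne H h.nice e he)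
    (fun U hU => by convert dl_star (ea H) (eb H) (cls_ne H h.nice) U hU)
    (K H u s) (K H u u1) (K H u u2) (K H u1 y1) (K H u1 y2) (K H u2 z1) (K H u2 z2)
    (hmem _ _ aus) (hmem _ _ au1) (hmem _ _ au2) (hmem _ _ ay1) (hmem _ _ ay2) (hmem _ _ az1)
    (hmem _ _ az2) (tsum _ _ _ _ hu) s1 s2 n1 n2 n3 n4
  have hus : u ≠ s := aus.ne
  have hv : Θ f ≠ 0 := by
    rcases hf with rfl | rfl
    · exact hΘ _ (hmem _ _ ay1)
    · exact hΘ _ (hmem _ _ ay2)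
  have es := congrArg Θ (tsum _ _ _ _ hu)
  have es1 := congrArg Θ s1
  have es2 := congrArg Θ s2
  rw [map_add] at es es1 es2
  have b0 := hΘ _ (hmem _ _ aus)
  have c1 := hΘ _ (hmem _ _ ay1)
  have c2 := hΘ _ (hmem _ _ ay2)
  have c3 := hΘ _ (hmem _ _ az1)
  have c4 := hΘ _ (hmem _ _ az2)
  have hv1 : Θ f ≠ Θ (K H u u1) := by
    rw [es1]
    rcases hf with rfl | rfl <;> simpa using ‹_›
  have hv2 : Θ f ≠ Θ (K H u u2) := by
    rw [hfg, es2]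
    rcases hg with rfl | rfl <;> simpa using ‹_›
  let d : V → V → (Fin 3 → ZMod 2) := fun x y =>
    if (x = u ∧ y = s) ∨ (x = s ∧ y = u) then Θ f else 0
  have hd0 : ∀ x y, x ≠ u → x ≠ s → d x y = 0 := by
    intro x y hx hy; simp [d, hx, hy]
  have hdu : ∀ y, y ≠ s → d u y = 0 := by
    intro y hy; simp [d, hy, hus]
  have hdus : d u s = Θ f := by simp [d]
  have hK1 : ∀ x, ∑ y, Θ (K H x y) = 0 := by
    intro x; rw [← map_sum, K_sum, map_zero]
  refine ⟨fun x y => Θ (K H x y) + d x y, Θ f, u, hv, hus, ?_, ?_, ?_, ?_, ?_, ?_⟩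
  · intro x y
    simp only
    rw [K_symm]
    congr 1
    simp only [d]
    apply if_congr _ rfl rfl
    tauto
  · intro x y hxy
    have hk := hΘ _ (hmem _ _ hxy)
    simp only [d]
    split_ifs with hc
    · have : K H x y = K H u s := by
        rcases hc with ⟨rfl, rfl⟩ | ⟨rfl, rfl⟩
        · rfl
        · exact K_symm H _ _
      rw [this]
      intro h0
      apply hne
      rw [← add_right_inj (Θ (K H u s)), h0, ZModModule.add_self]
    · simpa using hk
  · intro x y hxy
    simp only
    rw [K_nadj H hxy, map_zero, zero_add]
    simp only [d]
    rw [if_neg]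
    rintro (⟨rfl, rfl⟩ | ⟨rfl, rfl⟩)
    · exact hxy aus
    · exact hxy aus.symm
  · intro x
    rw [Finset.sum_add_distrib, hK1, zero_add]
    by_cases hxs : x = s
    · subst hxs
      rw [if_pos (by simp), Finset.sum_eq_single u]
      · simp [d]
      · intro y _ hy; simp [d, hy, hus.symm]
      · simp
    · by_cases hxu : x = u
      · subst hxu
        rw [if_pos (by simp), Finset.sum_eq_single s]
        · simp [d]
        · intro y _ hy; exact hdu y hy
        · simp
      · rw [if_neg (by simp [hxs, hxu])]
        exact Finset.sum_eq_zero (fun y _ => hd0 x y hxu hxs)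
  · have hs1 : u1 ≠ s := hu.1.symm
    have hs2 : u2 ≠ s := hu.2.1.symm
    have t0 := hdus
    have t1 := hdu u1 hs1
    have t2 := hdu u2 hs2
    have da := ZModModule.add_self (Θ (K H u u1))
    have db := ZModModule.add_self (Θ (K H u u2))
    have dc := ZModModule.add_self (Θ f)
    have x1 : Θ (K H u u1) ≠ Θ (K H u u2) := by
      intro h; rw [es, h] at b0; exact b0 db
    have x2 : Θ (K H u s) + Θ f ≠ Θ (K H u u1) := by
      rw [es]; clear * - hv2 db dc; grind
    have x3 : Θ (K H u s) + Θ f ≠ Θ (K H u u2) := by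
      rw [es]; clear * - hv1 da dc; grind
    intro y y' hy hy' he
    rw [hu.2.2.2] at hy hy'
    rcases hy with rfl | rfl | rfl <;> rcases hy' with rfl | rfl | rfl <;>
      simp only [t0, t1, t2, add_zero] at he
    · rfl
    · exact absurd he x2
    · exact absurd he x3
    · exact absurd he.symm x2
    · rfl
    · exact absurd he x1
    · exact absurd he.symm x3
    · exact absurd he.symm x1
    · rfl
  · intro y hy hys
    have hs1 : u1 ≠ s := hu.1.symm
    have hs2 : u2 ≠ s := hu.2.1.symm
    rw [hu.2.2.2] at hy
    rcases hy with rfl | rfl | rfl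
    · exact absurd rfl hys
    · simp only [hd0 y _ au1.ne' hs1, add_zero]
      rcases hf with rfl | rfl
      · exact ⟨_, rfl⟩
      · exact ⟨_, rfl⟩
    · simp only [hd0 y _ au2.ne' hs2, add_zero]
      rw [hfg]
      rcases hg with rfl | rfl
      · exact ⟨_, rfl⟩
      · exact ⟨_, rfl⟩
end gr3
end Pf

namespace Pf
open Module Submodule
set_option linter.unusedSectionVars false
section gr4
variable {V : Type*} [Fintype V] [DecidableEq V] (H : SimpleGraph V)

/-- bad configuration -/
structure Bad (s u w u1 z p q : V) (f : V → ZMod 2) : Prop where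
  hyp : Hyp H s u w
  tu : Tri H u s u1 p
  tu1 : Tri H u1 u z q
  au : ∀ y, H.Adj u y ↔ y = s ∨ y = u1 ∨ y = p
  au1 : ∀ y, H.Adj u1 y ↔ y = u ∨ y = z ∨ y = q
  as : ∀ y, H.Adj s y ↔ y = u ∨ y = w
  same : ∀ x y, H.Adj x y → x ≠ u → x ≠ u1 → y ≠ u → y ≠ u1 → f x = f y
  fs : f s = 0
  fu : f u = 1
  fu1 : f u1 = 1
  fp : f p = 1
  fq : f q = 1
  fz : f z = 0
  su : s ≠ u
  su1 : s ≠ u1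
  sz : s ≠ z
  uu1 : u ≠ u1
  uz : u ≠ z
  up : u ≠ p
  uq : u ≠ q
  u1z : u1 ≠ z
  u1p : u1 ≠ p
  u1q : u1 ≠ q
  pq : p ≠ q
  wu : w ≠ u
  wu1 : w ≠ u1
  wp : w ≠ p
  wq : w ≠ q
  fl : ∀ φ, IsFl H φ → φ u s = φ u1 z ∧ φ u p = φ u1 q

theorem mk_bad {s u w u1 z p q : V} (h : Hyp H s u w) (tu : Tri H u s u1 p) (tu1 : Tri H u1 u z q)
    (hK : K H u s = K H u1 z) : ∃ f, Bad H s u w u1 z p q f := by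
  have aus : H.Adj u s := (tu.2.2.2 _).2 (by simp)
  have auu1 : H.Adj u u1 := (tu.2.2.2 _).2 (by simp)
  have aup : H.Adj u p := (tu.2.2.2 _).2 (by simp)
  have au1z : H.Adj u1 z := (tu1.2.2.2 _).2 (by simp)
  have au1q : H.Adj u1 q := (tu1.2.2.2 _).2 (by simp)
  have hfl : ∀ φ, IsFl H φ → φ u s = φ u1 z ∧ φ u p = φ u1 q := by
    intro φ hφ
    obtain ⟨l, hl⟩ := K_functional H φ hφ
    have e1 : φ u s = φ u1 z := by rw [← hl _ _ aus, ← hl _ _ au1z, hK]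
    refine ⟨e1, ?_⟩
    have s1 := hφ.2.2 u
    have s2 := hφ.2.2 u1
    rw [tu.sum _ (fun y hy => hφ.2.1 _ _ hy)] at s1
    rw [tu1.sum _ (fun y hy => hφ.2.1 _ _ hy), hφ.1 u1 u] at s2
    generalize φ u p = a at *
    generalize φ u1 q = b at *
    generalize φ u s = c at *
    generalize φ u1 z = d at *
    generalize φ u u1 = e at *
    clear * - s1 s2 e1
    revert a b c d e
    decide
  obtain ⟨f0, hf0⟩ := K_eq_cut H aus au1z hK
  have asy := h.hs
  have auy := tu.2.2.2
  have au1y := tu1.2.2.2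
  have nsu1 : s ≠ u1 := tu.1
  have nsp : s ≠ p := tu.2.1
  have nu1p : u1 ≠ p := tu.2.2.1
  have nuz : u ≠ z := tu1.1
  have nuq : u ≠ q := tu1.2.1
  have nzq : z ≠ q := tu1.2.2.1
  have huw := h.huw
  have nuw := h.nuw
  have nwu1 : w ≠ u1 := by rintro rfl; exact nuw auu1
  have nwp : w ≠ p := by rintro rfl; exact nuw aup
  have nsz : s ≠ z := by
    rintro rfl
    have := (asy u1).1 au1z.symm
    rcases this with h | h
    · exact auu1.ne h.symm
    · exact nwu1 h.symm
  have nsq : s ≠ q := by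
    rintro rfl
    have := (asy u1).1 au1q.symm
    rcases this with h | h
    · exact auu1.ne h.symm
    · exact nwu1 h.symm
  have npq : p ≠ q := by
    rintro rfl
    obtain ⟨b, c, ht⟩ := h.tri H nsp.symm aup.symm
    obtain ⟨t, ht⟩ := ht.perm2 au1q.symm auu1.ne'
    have hpt : H.Adj p t := (ht.2.2.2 _).2 (by simp)
    obtain ⟨φ, h1, h2⟩ := h.nice p t hpt
    have s1 := h1.2.2 p
    rw [ht.sum _ (fun y hy => h1.2.1 _ _ hy), h1.1 p u, h1.1 p u1, (hfl φ h1).2,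
      ZModModule.add_self, zero_add, h2] at s1
    exact absurd s1 (by decide)
  have d1 := auu1.ne
  have d2 := aus.ne
  have d3 := aup.ne
  have d4 := au1z.ne
  have d5 := au1q.ne
  have eqz : ∀ a b : ZMod 2, a + b = 0 → a = b := by decide
  have hsame : ∀ x y, H.Adj x y → s(x, y) ≠ s(u, s) → s(x, y) ≠ s(u1, z) → f0 x = f0 y := by
    intro x y hxy h1 h2
    have := hf0 x y hxy
    rw [if_neg h1, if_neg h2, add_zero] at this
    exact eqz _ _ this
  have e1 : f0 u = f0 s + 1 := by
    have := hf0 u s aus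
    rw [if_pos rfl, if_neg (by simp; grind), add_zero] at this
    generalize f0 u = a at *
    generalize f0 s = b at *
    clear * - this
    revert a b; decide
  have e2 : f0 u1 = f0 z + 1 := by
    have := hf0 u1 z au1z
    rw [if_neg (by simp; grind), if_pos rfl, zero_add] at this
    generalize f0 u1 = a at *
    generalize f0 z = b at *
    clear * - this
    revert a b; decide
  have e3 : f0 u = f0 u1 := hsame _ _ auu1 (by simp; grind) (by simp; grind)
  have e4 : f0 u = f0 p := hsame _ _ aup (by simp; grind) (by simp; grind)
  have e5 : f0 u1 = f0 q := hsame _ _ au1q (by simp; grind) (by simp; grind)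
  have asw : H.Adj s w := (asy w).2 (by simp)
  have e6 : f0 s = f0 w := hsame _ _ asw (by simp; grind) (by simp; grind)
  have nwq : w ≠ q := by
    rintro rfl
    rw [← e6, ← e3, e1] at e5
    generalize f0 s = b at *
    clear * - e5
    revert b; decide
  have e7 : f0 z = f0 s := by
    rw [← e3, e1] at e2; exact (add_left_injective 1 e2).symm
  have hb : ∀ b : ZMod 2, b + 1 + b = 1 := by decide
  refine ⟨fun x => f0 x + f0 s, h, tu, tu1, auy, au1y, asy, ?_, ?_, ?_, ?_, ?_, ?_, ?_, d2.symm, nsu1,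
    nsz, d1, nuz, d3, nuq, d4, nu1p, d5, npq, huw.symm, nwu1, nwp, nwq, hfl⟩
  · intro x y hxy a1 a2 a3 a4
    show f0 x + f0 s = f0 y + f0 s
    rw [hsame x y hxy (by simp; grind) (by simp; grind)]
  · exact ZModModule.add_self _
  · show f0 u + f0 s = 1
    rw [e1]; exact hb _
  · show f0 u1 + f0 s = 1
    rw [← e3, e1]; exact hb _
  · show f0 p + f0 s = 1
    rw [← e4, e1]; exact hb _
  · show f0 q + f0 s = 1
    rw [← e5, ← e3, e1]; exact hb _
  · show f0 z + f0 s = 0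
    rw [e7]; exact ZModModule.add_self _

/-- reduced graph -/
def hat (s u u1 z p q : V) : SimpleGraph V where
  Adj x y := x ≠ y ∧ x ≠ u ∧ x ≠ u1 ∧ y ≠ u ∧ y ≠ u1 ∧ (H.Adj x y ∨ (x = s ∧ y = p) ∨
    (x = p ∧ y = s) ∨ (x = q ∧ y = z) ∨ (x = z ∧ y = q))
  symm := ⟨fun x y h => by
    obtain ⟨h1, h2, h3, h4, h5, h6⟩ := h
    refine ⟨h1.symm, h4, h5, h2, h3, ?_⟩
    rw [H.adj_comm]; tauto⟩
  loopless := ⟨fun x h => h.1 rfl⟩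

/-- local relabelling -/
def sg (s u u1 z p q : V) (x : V) : Equiv.Perm V :=
  if x = p then Equiv.swap u s else if x = s then Equiv.swap u p else
  if x = q then Equiv.swap u1 z else if x = z then Equiv.swap u1 q else 1

variable {H}
theorem Bad.hat_adj {s u w u1 z p q : V} {f : V → ZMod 2} (B : Bad H s u w u1 z p q f) (x y : V)
    (hx : x ≠ u) (hx1 : x ≠ u1) : (hat H s u u1 z p q).Adj x y ↔ H.Adj x (sg s u u1 z p q x y) := by
  have hsp : s ≠ p := fun h => by have := B.fs; rw [h, B.fp] at this; exact absurd this (by decide)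
  have hsq : s ≠ q := fun h => by have := B.fs; rw [h, B.fq] at this; exact absurd this (by decide)
  have hzq : z ≠ q := fun h => by have := B.fz; rw [h, B.fq] at this; exact absurd this (by decide)
  have hzp : z ≠ p := fun h => by have := B.fz; rw [h, B.fp] at this; exact absurd this (by decide)
  have hnzq : ¬ H.Adj z q := by
    intro h
    have := B.same z q h B.uz.symm B.u1z.symm B.uq.symm B.u1q.symm
    rw [B.fz, B.fq] at this; exact absurd this (by decide)
  have aus := fun y => (H.adj_comm y u).trans (B.au y)
  have aus1 := fun y => (H.adj_comm y u1).trans (B.au1 y)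
  have ass := fun y => (H.adj_comm y s).trans (B.as y)
  have hnqz : ¬ H.Adj q z := fun h => hnzq h.symm
  have hxx : ¬ H.Adj x x := H.irrefl
  have := B.su
  have := B.su1
  have := B.sz
  have := B.uu1
  have := B.uz
  have := B.up
  have := B.uq
  have := B.u1z
  have := B.u1p
  have := B.u1q
  have := B.pq
  have := B.wu
  have := B.wu1
  have := B.wp
  have := B.wq
  have as := B.as
  have xu := aus x
  have xu1 := aus1 x
  have xs := ass x
  clear B
  simp only [hat, sg]
  by_cases c1 : x = p
  · subst c1
    simp only [if_true, Equiv.swap_apply_def]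
    by_cases y = u <;> by_cases y = s <;> by_cases y = u1 <;> grind
  by_cases c2 : x = s
  · subst c2
    simp only [if_true, c1, if_false, Equiv.swap_apply_def]
    by_cases y = u <;> by_cases y = p <;> by_cases y = u1 <;> grind
  by_cases c3 : x = q
  · subst c3
    simp only [if_true, c1, c2, if_false, Equiv.swap_apply_def]
    by_cases y = u <;> by_cases y = z <;> by_cases y = u1 <;> grind
  by_cases c4 : x = z
  · subst c4
    simp only [if_true, c1, c2, c3, if_false, Equiv.swap_apply_def]
    by_cases y = u <;> by_cases y = q <;> by_cases y = u1 <;> grind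
  · simp only [c1, c2, c3, c4, if_false, Equiv.Perm.coe_one, id]
    by_cases y = u <;> by_cases y = u1 <;> grind
end gr4
end Pf

namespace Pf
open Module Submodule
set_option linter.unusedSectionVars false
section gr5
variable {V : Type*} [Fintype V] [DecidableEq V] {H : SimpleGraph V}

theorem sg_invol (s u u1 z p q x y : V) : sg s u u1 z p q x (sg s u u1 z p q x y) = y := by
  unfold sg
  split_ifs <;> simp

theorem sg_sum {M : Type*} [AddCommMonoid M] (s u u1 z p q x : V) (g : V → M) :
    ∑ y, g (sg s u u1 z p q x y) = ∑ y, g y := Equiv.sum_comp _ _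

variable {s u w u1 z p q : V} {f : V → ZMod 2}

theorem Bad.sp (B : Bad H s u w u1 z p q f) : s ≠ p :=
  fun h => by have := B.fs; rw [h, B.fp] at this; exact absurd this (by decide)
theorem Bad.sq (B : Bad H s u w u1 z p q f) : s ≠ q :=
  fun h => by have := B.fs; rw [h, B.fq] at this; exact absurd this (by decide)
theorem Bad.zq (B : Bad H s u w u1 z p q f) : z ≠ q :=
  fun h => by have := B.fz; rw [h, B.fq] at this; exact absurd this (by decide)
theorem Bad.zp (B : Bad H s u w u1 z p q f) : z ≠ p :=
  fun h => by have := B.fz; rw [h, B.fp] at this; exact absurd this (by decide)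
theorem Bad.nzq (B : Bad H s u w u1 z p q f) : ¬ H.Adj z q := by
  intro h
  have := B.same z q h B.uz.symm B.u1z.symm B.uq.symm B.u1q.symm
  rw [B.fz, B.fq] at this; exact absurd this (by decide)

theorem Bad.sg_sp (B : Bad H s u w u1 z p q f) : sg s u u1 z p q s p = u := by
  simp [sg, B.sp]
theorem Bad.sg_su (B : Bad H s u w u1 z p q f) : sg s u u1 z p q s u = p := by
  simp [sg, B.sp]
theorem Bad.sg_ps (B : Bad H s u w u1 z p q f) : sg s u u1 z p q p s = u := by
  simp [sg]
theorem Bad.sg_pu (B : Bad H s u w u1 z p q f) : sg s u u1 z p q p u = s := by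
  simp [sg]
theorem Bad.sg_qz (B : Bad H s u w u1 z p q f) : sg s u u1 z p q q z = u1 := by
  simp [sg, B.pq.symm, B.sq.symm]
theorem Bad.sg_qu1 (B : Bad H s u w u1 z p q f) : sg s u u1 z p q q u1 = z := by
  simp [sg, B.pq.symm, B.sq.symm]
theorem Bad.sg_zq (B : Bad H s u w u1 z p q f) : sg s u u1 z p q z q = u1 := by
  simp [sg, B.zp, B.sz.symm, B.zq]
theorem Bad.sg_zu1 (B : Bad H s u w u1 z p q f) : sg s u u1 z p q z u1 = q := by
  simp [sg, B.zp, B.sz.symm, B.zq]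

theorem Bad.sg_same (B : Bad H s u w u1 z p q f) {x y : V} (hxy : H.Adj x y)
    (hy : y ≠ u) (hy1 : y ≠ u1) : sg s u u1 z p q x y = y := by
  have a1 := (B.as p).not.2 (by have := B.up; have := B.wp; grind)
  have a2 := B.nzq
  have a1' : ¬ H.Adj p s := fun h => a1 h.symm
  have a2' : ¬ H.Adj q z := fun h => a2 h.symm
  unfold sg
  split_ifs with h1 h2 h3 h4
  · subst h1
    apply Equiv.swap_apply_of_ne_of_ne hy
    rintro rfl; exact a1' hxy
  · subst h2
    apply Equiv.swap_apply_of_ne_of_ne hy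
    rintro rfl; exact a1 hxy
  · subst h3
    apply Equiv.swap_apply_of_ne_of_ne hy1
    rintro rfl; exact a2' hxy
  · subst h4
    apply Equiv.swap_apply_of_ne_of_ne hy1
    rintro rfl; exact a2 hxy
  · rfl

theorem Bad.glue (B : Bad H s u w u1 z p q f) (φA φB : V → V → ZMod 2) (hA : IsFl H φA)
    (hB : IsFl H φB) (he : φA u p = φB u s) :
    ∃ φ, IsFl (hat H s u u1 z p q) φ ∧ φ s p = φB u s ∧ φ q z = φA u p ∧
      ∀ x y, H.Adj x y → x ≠ u → x ≠ u1 → y ≠ u → y ≠ u1 →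
        φ x y = if f x = 1 then φA x y else φB x y := by
  let φ : V → V → ZMod 2 := fun x y => if x = u ∨ x = u1 then 0 else
    if f x = 1 then φA x (sg s u u1 z p q x y) else φB x (sg s u u1 z p q x y)
  have hval : ∀ x y, H.Adj x y → x ≠ u → x ≠ u1 → y ≠ u → y ≠ u1 →
        φ x y = if f x = 1 then φA x y else φB x y := by
    intro x y hxy h1 h2 h3 h4
    simp only [φ, h1, h2, or_self, if_false, B.sg_same hxy h3 h4]
  have fs := B.fs
  have fz := B.fz
  have z1 : (0 : ZMod 2) ≠ 1 := by decide
  have hsp : φ s p = φB u s := by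
    simp [φ, B.su, B.su1, B.fs, B.sg_sp, hB.1 s u]
  have hps : φ p s = φA u p := by
    simp [φ, B.up.symm, B.u1p.symm, B.fp, B.sg_ps, hA.1 p u]
  have hqz : φ q z = φA u p := by
    simp [φ, B.uq.symm, B.u1q.symm, B.fq, B.sg_qz, hA.1 q u1, (B.fl _ hA).2]
  have hzq : φ z q = φB u s := by
    simp [φ, B.uz.symm, B.u1z.symm, B.fz, B.sg_zq, hB.1 z u1, (B.fl _ hB).1]
  have hnadj : ∀ x y, ¬ (hat H s u u1 z p q).Adj x y → φ x y = 0 := by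
    intro x y hn
    by_cases hx : x = u ∨ x = u1
    · simp [φ, hx]
    · push Not at hx
      rw [B.hat_adj x y hx.1 hx.2] at hn
      simp only [φ, hx.1, hx.2, or_self, if_false, hA.2.1 _ _ hn, hB.2.1 _ _ hn, ite_self]
  refine ⟨φ, ⟨?_, hnadj, ?_⟩, hsp, hqz, hval⟩
  · intro x y
    by_cases hxy : (hat H s u u1 z p q).Adj x y
    · obtain ⟨_, h1, h2, h3, h4, h5⟩ := id hxy
      rcases h5 with h5 | ⟨rfl, rfl⟩ | ⟨rfl, rfl⟩ | ⟨rfl, rfl⟩ | ⟨rfl, rfl⟩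
      · rw [hval x y h5 h1 h2 h3 h4, hval y x h5.symm h3 h4 h1 h2, B.same x y h5 h1 h2 h3 h4,
          hA.1 x y, hB.1 x y]
      · rw [hsp, hps, he]
      · rw [hsp, hps, he]
      · rw [hqz, hzq, he]
      · rw [hqz, hzq, he]
    · rw [hnadj x y hxy, hnadj y x (fun h => hxy h.symm)]
  · intro x
    by_cases hx : x = u ∨ x = u1
    · simp [φ, hx]
    · simp only [φ, hx, if_false]
      split_ifs
      · rw [sg_sum (M := ZMod 2) s u u1 z p q x (fun y => φA x y), hA.2.2]
      · rw [sg_sum (M := ZMod 2) s u u1 z p q x (fun y => φB x y), hB.2.2]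

theorem zero_fl : IsFl H (fun _ _ => 0) := ⟨fun _ _ => rfl, fun _ _ _ => rfl, fun _ => by simp⟩

theorem Bad.hat_hyp (B : Bad H s u w u1 z p q f) : Hyp (hat H s u u1 z p q) s p w := by
  have z1 : (0 : ZMod 2) ≠ 1 := by decide
  have asw : H.Adj s w := (B.as w).2 (by simp)
  have aus : H.Adj u s := (B.au s).2 (by simp)
  have aup : H.Adj u p := (B.au p).2 (by simp)
  have fw : f w = 0 := by rw [← B.same s w asw B.su B.su1 B.wu B.wu1, B.fs]
  refine ⟨?_, B.wp.symm, ?_, ?_, ?_⟩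
  · have hnew : ∃ φ, IsFl (hat H s u u1 z p q) φ ∧ φ s p = 1 ∧ φ q z = 1 := by
      obtain ⟨φA, a1, a2⟩ := B.hyp.nice u p aup
      obtain ⟨φB, b1, b2⟩ := B.hyp.nice u s aus
      obtain ⟨φ, c1, c2, c3, _⟩ := B.glue φA φB a1 b1 (by rw [a2, b2])
      exact ⟨φ, c1, by rw [c2, b2], by rw [c3, a2]⟩
    intro x y hxy
    obtain ⟨_, h1, h2, h3, h4, h5⟩ := id hxy
    rcases h5 with h5 | ⟨rfl, rfl⟩ | ⟨rfl, rfl⟩ | ⟨rfl, rfl⟩ | ⟨rfl, rfl⟩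
    · obtain ⟨φ0, g1, g2⟩ := B.hyp.nice x y h5
      rcases zmod2 (f x) with hf | hf
      · have : ∃ φA, IsFl H φA ∧ φA u p = φ0 u s := by
          rcases zmod2 (φ0 u s) with h0 | h0
          · exact ⟨_, zero_fl, h0.symm⟩
          · rw [h0]; exact B.hyp.nice u p aup
        obtain ⟨φA, a1, a2⟩ := this
        obtain ⟨φ, c1, _, _, c4⟩ := B.glue φA φ0 a1 g1 a2
        refine ⟨φ, c1, ?_⟩
        rw [c4 x y h5 h1 h2 h3 h4, hf, if_neg z1, g2]
      · have : ∃ φB, IsFl H φB ∧ φB u s = φ0 u p := by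
          rcases zmod2 (φ0 u p) with h0 | h0
          · exact ⟨_, zero_fl, h0.symm⟩
          · rw [h0]; exact B.hyp.nice u s aus
        obtain ⟨φB, a1, a2⟩ := this
        obtain ⟨φ, c1, _, _, c4⟩ := B.glue φ0 φB g1 a1 a2.symm
        refine ⟨φ, c1, ?_⟩
        rw [c4 x y h5 h1 h2 h3 h4, hf, if_pos rfl, g2]
    · obtain ⟨φ, c1, c2, c3⟩ := hnew
      exact ⟨φ, c1, c2⟩
    · obtain ⟨φ, c1, c2, c3⟩ := hnew
      exact ⟨φ, c1, by rw [c1.1, c2]⟩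
    · obtain ⟨φ, c1, c2, c3⟩ := hnew
      exact ⟨φ, c1, c3⟩
    · obtain ⟨φ, c1, c2, c3⟩ := hnew
      exact ⟨φ, c1, by rw [c1.1, c3]⟩
  · intro y
    rw [B.hat_adj s y B.su B.su1, B.as]
    have e1 : sg s u u1 z p q s w = w := B.sg_same asw B.wu B.wu1
    constructor
    · rintro (h | h)
      · left; rw [← sg_invol s u u1 z p q s y, h, B.sg_su]
      · right; rw [← sg_invol s u u1 z p q s y, h, e1]
    · rintro (rfl | rfl)
      · left; exact B.sg_sp
      · right; exact e1
  · intro h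
    obtain ⟨_, h1, h2, h3, h4, h5⟩ := id h
    have hzp := B.zp
    have hpq := B.pq
    have hsp := B.sp
    rcases h5 with h5 | ⟨h5, h6⟩ | ⟨h5, h6⟩ | ⟨h5, h6⟩ | ⟨h5, h6⟩
    · have := B.same p w h5 h1 h2 h3 h4
      rw [fw, B.fp] at this
      exact z1 this.symm
    · exact hsp h5.symm
    · exact asw.ne h6.symm
    · exact hpq h5
    · exact hzp h5.symm
  · intro x hx
    by_cases hxu : x = u ∨ x = u1
    · left
      intro y hy
      obtain ⟨_, h1, h2, _⟩ := hy
      tauto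
    · push Not at hxu
      rcases B.hyp.deg x hx with h | ⟨a, b, c, h1, h2, h3, h4⟩
      · left
        intro y
        rw [B.hat_adj x y hxu.1 hxu.2]
        exact h _
      · right
        refine ⟨sg s u u1 z p q x a, sg s u u1 z p q x b, sg s u u1 z p q x c, by simpa using h1,
          by simpa using h2, by simpa using h3, ?_⟩
        intro y
        rw [B.hat_adj x y hxu.1 hxu.2, h4]
        have : ∀ a, sg s u u1 z p q x y = a ↔ y = sg s u u1 z p q x a := by
          intro a
          constructor
          · rintro rfl; rw [sg_invol]
          · rintro rfl; rw [sg_invol]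
        simp only [this]
end gr5
end Pf

namespace Pf
open Module Submodule
set_option linter.unusedSectionVars false
section gr6

theorem fun3 : ∀ a0 a1 a2 b0 b1 b2 : ZMod 2, ¬ (b0 = 0 ∧ b1 = 0 ∧ b2 = 0) →
    ¬ (a0 = 0 ∧ a1 = 0 ∧ a2 = 0) → ¬ (a0 = b0 ∧ a1 = b1 ∧ a2 = b2) →
    ∃ w0 w1 w2 : ZMod 2, w0 * b0 + w1 * b1 + w2 * b2 = 0 ∧ w0 * a0 + w1 * a1 + w2 * a2 = 1 := by
  decide

theorem ext3 (a b : Fin 3 → ZMod 2) : a = b ↔ (a 0 = b 0 ∧ a 1 = b 1 ∧ a 2 = b 2) := by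
  constructor
  · rintro rfl; simp
  · rintro ⟨h0, h1, h2⟩
    funext i; fin_cases i <;> assumption

theorem shear (x0 b : Fin 3 → ZMod 2) (hx : x0 ≠ 0) (hb : b ≠ 0) (hxb : x0 ≠ b) :
    ∃ τ : (Fin 3 → ZMod 2) →+ (Fin 3 → ZMod 2), Function.Injective τ ∧ τ b = b ∧
      τ x0 = x0 + b := by
  obtain ⟨w0, w1, w2, h1, h2⟩ := fun3 (x0 0) (x0 1) (x0 2) (b 0) (b 1) (b 2)
    (by rwa [Ne, ext3] at hb) (by rwa [Ne, ext3] at hx) (by rwa [Ne, ext3] at hxb)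
  let l : (Fin 3 → ZMod 2) → ZMod 2 := fun m => w0 * m 0 + w1 * m 1 + w2 * m 2
  have ladd : ∀ m n, l (m + n) = l m + l n := by
    intro m n; simp only [l, Pi.add_apply]; ring
  have lb : l b = 0 := h1
  have lx : l x0 = 1 := h2
  let τ : (Fin 3 → ZMod 2) →+ (Fin 3 → ZMod 2) := AddMonoidHom.mk' (fun m => m + l m • b) (by
    intro m n; simp only [ladd, add_smul]; abel)
  have τv : ∀ m, τ m = m + l m • b := fun m => rfl
  have lsm : ∀ a : ZMod 2, l (a • b) = 0 := by
    intro a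
    rcases zmod2 a with rfl | rfl
    · simp [l]
    · rw [one_smul, lb]
  refine ⟨τ, ?_, by rw [τv, lb, zero_smul, add_zero], by rw [τv, lx, one_smul]⟩
  rw [injective_iff_map_eq_zero]
  intro m hm
  rw [τv] at hm
  have h3 : l m = 0 := by
    have : l (m + l m • b) = l 0 := by rw [hm]
    rw [ladd, lsm, add_zero] at this
    rw [this]; simp [l]
  rwa [h3, zero_smul, add_zero] at hm

theorem pick (x0 v : Fin 3 → ZMod 2) (hv : v ≠ 0) : ∃ b : Fin 3 → ZMod 2, b ≠ 0 ∧ x0 ≠ b ∧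
    (v ≠ x0 → b = v) := by
  by_cases h : v = x0
  · subst h
    by_cases h1 : v = Pi.single 0 1
    · refine ⟨Pi.single 1 1, by simp [ext3], ?_, by simp⟩
      rw [h1]; simp [ext3]
    · exact ⟨Pi.single 0 1, by simp [ext3], h1, by simp⟩
  · exact ⟨v, hv, fun h' => h h'.symm, fun _ => rfl⟩

variable {V : Type*} [Fintype V] [DecidableEq V] {H : SimpleGraph V}
variable {s u w u1 z p q : V} {f : V → ZMod 2}

theorem sum_swap_zero {M : Type*} [AddCommGroup M] [Module (ZMod 2) M] (A : Finset V)
    (g : V → V → M) (hg : ∀ x y, g x y = g y x) (h0 : ∀ x, g x x = 0) :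
    ∑ x ∈ A, ∑ y ∈ A, g x y = 0 := by
  rw [← Finset.sum_product']
  apply Finset.sum_involution (fun a _ => (a.2, a.1))
  · intro a _
    show g a.1 a.2 + g a.2 a.1 = 0
    rw [hg a.2 a.1]; exact ZModModule.add_self _
  · intro a _ h hh
    apply h
    have : a.2 = a.1 := congrArg Prod.fst hh
    rw [this]; exact h0 _
  · intro a ha; rw [Finset.mem_product] at *; exact ⟨ha.2, ha.1⟩
  · intro a _; rfl

/-- cut computation -/
theorem Bad.cut (B : Bad H s u w u1 z p q f) (θ : V → V → (Fin 3 → ZMod 2))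
    (hsym : ∀ x y, θ x y = θ y x) (h0 : ∀ x y, ¬ (hat H s u u1 z p q).Adj x y → θ x y = 0)
    (P : V) (v : Fin 3 → ZMod 2) (hP : P ≠ u) (hP1 : P ≠ u1)
    (hsum : ∀ x, ∑ y, θ x y = if x = s ∨ x = P then v else 0) :
    θ s p + θ q z = if f P = 1 then v else 0 := by
  have z1 : (0 : ZMod 2) ≠ 1 := by decide
  let A : Finset V := Finset.univ.filter (fun x => f x = 1 ∧ x ≠ u ∧ x ≠ u1)
  have hA : ∀ x, x ∈ A ↔ f x = 1 ∧ x ≠ u ∧ x ≠ u1 := by simp [A]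
  have e1 : ∑ x ∈ A, ∑ y, θ x y = if f P = 1 then v else 0 := by
    have : ∀ x ∈ A, ∑ y, θ x y = if x = P then v else 0 := by
      intro x hx
      rw [hsum]
      have : x ≠ s := by
        rintro rfl; rw [hA, B.fs] at hx; exact z1 hx.1
      simp [this]
    rw [Finset.sum_congr rfl this, Finset.sum_ite_eq']
    simp [hA, hP, hP1]
  have e2 : ∑ x ∈ A, ∑ y, θ x y = ∑ x ∈ A, ∑ y ∈ A, θ x y + ∑ x ∈ A, ∑ y ∈ Aᶜ, θ x y := by
    rw [← Finset.sum_add_distrib]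
    exact Finset.sum_congr rfl (fun x _ => (Finset.sum_add_sum_compl A _).symm)
  rw [sum_swap_zero A θ hsym (fun x => h0 _ _ (SimpleGraph.irrefl _)), zero_add] at e2
  have hpA : p ∈ A := (hA p).2 ⟨B.fp, B.up.symm, B.u1p.symm⟩
  have hqA : q ∈ A := (hA q).2 ⟨B.fq, B.uq.symm, B.u1q.symm⟩
  have hsA : s ∈ Aᶜ := by rw [Finset.mem_compl, hA, B.fs]; exact fun h => z1 h.1
  have hzA : z ∈ Aᶜ := by rw [Finset.mem_compl, hA, B.fz]; exact fun h => z1 h.1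
  have cross : ∀ x ∈ A, ∀ y ∈ Aᶜ, θ x y ≠ 0 → (x = p ∧ y = s) ∨ (x = q ∧ y = z) := by
    intro x hx y hy hn
    have hxy : (hat H s u u1 z p q).Adj x y := by by_contra h; exact hn (h0 _ _ h)
    obtain ⟨_, h1, h2, h3, h4, h5⟩ := hxy
    rw [hA] at hx
    rw [Finset.mem_compl, hA] at hy
    rcases h5 with h5 | h5 | h5 | h5 | h5
    · have := B.same x y h5 h1 h2 h3 h4
      exact absurd ⟨this ▸ hx.1, h3, h4⟩ hy
    · rw [h5.1, B.fs] at hx; exact absurd hx.1 z1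
    · exact Or.inl h5
    · exact Or.inr h5
    · rw [h5.1, B.fz] at hx; exact absurd hx.1 z1
  have e3 : ∑ x ∈ A, ∑ y ∈ Aᶜ, θ x y = θ p s + θ q z := by
    have hpq := B.pq
    have hsz := B.sz
    rw [← Finset.sum_product']
    rw [← Finset.sum_subset (s₁ := {(p, s), (q, z)})]
    · rw [Finset.sum_pair (by simp [hpq])]
    · intro a ha
      simp only [Finset.mem_insert, Finset.mem_singleton] at ha
      rcases ha with rfl | rfl <;> simp only [Finset.mem_product] <;> exact ⟨by assumption, by assumption⟩
    · intro a ha hn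
      by_contra hne
      rw [Finset.mem_product] at ha
      rcases cross a.1 ha.1 a.2 ha.2 hne with h | h
      · apply hn; simp [Prod.ext_iff, h.1, h.2]
      · apply hn; simp [Prod.ext_iff, h.1, h.2]
  rw [hsym s p, ← e3, ← e2, e1]

end gr6
end Pf

namespace Pf
open Module Submodule
set_option linter.unusedSectionVars false
section gr7
variable {V : Type*} [Fintype V] [DecidableEq V] {H : SimpleGraph V}
variable {s u w u1 z p q : V} {f : V → ZMod 2}

theorem Bad.back (B : Bad H s u w u1 z p q f) (hc : Concl (hat H s u u1 z p q) s) : Concl H s := by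
  obtain ⟨θ, v, P, hv, hPs, hsym, hnz, hz, hsum, hinj, hnb⟩ := hc
  have z1 : (0 : ZMod 2) ≠ 1 := by decide
  have isoU : ∀ y, ¬ (hat H s u u1 z p q).Adj u y := fun y h => h.2.1 rfl
  have isoU1 : ∀ y, ¬ (hat H s u u1 z p q).Adj u1 y := fun y h => h.2.2.1 rfl
  have hPu : P ≠ u := by
    rintro rfl
    have := hsum P
    rw [if_pos (Or.inr rfl), Finset.sum_eq_zero (fun y _ => hz _ _ (isoU y))] at this
    exact hv this.symm
  have hPu1 : P ≠ u1 := by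
    rintro rfl
    have := hsum P
    rw [if_pos (Or.inr rfl), Finset.sum_eq_zero (fun y _ => hz _ _ (isoU1 y))] at this
    exact hv this.symm
  have hcut := B.cut θ hsym hz P v hPu hPu1 hsum
  have adsp : (hat H s u u1 z p q).Adj s p := by
    rw [B.hat_adj s p B.su B.su1, B.sg_sp, B.as]; simp
  have adqz : (hat H s u u1 z p q).Adj q z := by
    rw [B.hat_adj q z B.uq.symm B.u1q.symm, B.sg_qz]
    exact ((B.au1 q).2 (by simp)).symm
  have hx0 := hnz _ _ adsp
  have hc0 := hnz _ _ adqz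
  set x0 := θ s p with hx0def
  set c := θ q z with hcdef
  have selfadd : ∀ m : Fin 3 → ZMod 2, m + m = 0 := ZModModule.add_self
  obtain ⟨b, hb, hxb, hbv⟩ := pick x0 v hv
  obtain ⟨τ, τinj, τb, τx⟩ := shear x0 b hx0 hb hxb
  have hvP : f P = 1 → b = v := by
    intro hf
    rw [if_pos hf] at hcut
    apply hbv
    rintro rfl
    apply hc0
    simpa using hcut
  have hcP : f P = 0 → c = x0 := by
    intro hf
    rw [hf, if_neg z1] at hcut
    have := selfadd c
    grind
  have hcP1 : f P = 1 → c = x0 + b := by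
    intro hf
    rw [if_pos hf, ← hvP hf] at hcut
    have := selfadd x0
    grind
  have τc : τ c = c + b := by
    rcases zmod2 (f P) with hf | hf
    · rw [hcP hf, τx]
    · rw [hcP1 hf, map_add, τx, τb]
  have hcb : c + b ≠ 0 := by
    rcases zmod2 (f P) with hf | hf
    · rw [hcP hf]
      intro h
      apply hxb
      have := selfadd b
      grind
    · rw [hcP1 hf, add_assoc, selfadd, add_zero]; exact hx0
  have hxb0 : x0 + b ≠ 0 := by
    intro h
    apply hxb
    have := selfadd b
    grind
  let T : V → (Fin 3 → ZMod 2) →+ (Fin 3 → ZMod 2) := fun x =>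
    if f x = 1 then τ else AddMonoidHom.id _
  have T1 : ∀ x, f x = 1 → T x = τ := fun x h => if_pos h
  have T0 : ∀ x, f x = 0 → T x = AddMonoidHom.id _ := fun x h => if_neg (by rw [h]; exact z1)
  have Tinj : ∀ x, Function.Injective (T x) := by
    intro x
    rcases zmod2 (f x) with h | h
    · rw [T0 x h]; exact Function.injective_id
    · rw [T1 x h]; exact τinj
  have Tnz : ∀ x m, m ≠ 0 → T x m ≠ 0 := by
    intro x m hm h
    exact hm (Tinj x (by rw [h, map_zero]))
  have Tv : ∀ x, f x = f P → T x v = v := by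
    intro x hx
    rcases zmod2 (f x) with h | h
    · rw [T0 x h]; rfl
    · rw [T1 x h, ← hvP (hx ▸ h), τb]
  let Θ : V → V → (Fin 3 → ZMod 2) := fun x y =>
    if x = u then (if y = s then x0 else if y = u1 then b else if y = p then x0 + b else 0)
    else if x = u1 then (if y = u then b else if y = z then c else if y = q then c + b else 0)
    else T x (θ x (sg s u u1 z p q x y))
  have Θo : ∀ x y, x ≠ u → x ≠ u1 → Θ x y = T x (θ x (sg s u u1 z p q x y)) := by
    intro x y h1 h2
    simp only [Θ, if_neg h1, if_neg h2]
  have Θus : Θ u s = x0 := by simp [Θ]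
  have Θuu1 : Θ u u1 = b := by simp [Θ, B.su1.symm]
  have Θup : Θ u p = x0 + b := by simp [Θ, B.sp.symm, B.u1p.symm]
  have Θu1u : Θ u1 u = b := by simp [Θ, B.uu1.symm]
  have Θu1z : Θ u1 z = c := by simp [Θ, B.uu1.symm, B.uz.symm]
  have Θu1q : Θ u1 q = c + b := by simp [Θ, B.uu1.symm, B.uq.symm, B.zq.symm]
  have Θsu : Θ s u = x0 := by
    rw [Θo _ _ B.su B.su1, B.sg_su, T0 _ B.fs]; rfl
  have Θpu : Θ p u = x0 + b := by
    rw [Θo _ _ B.up.symm B.u1p.symm, B.sg_pu, T1 _ B.fp, hsym p s, ← hx0def, τx]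
  have Θzu1 : Θ z u1 = c := by
    rw [Θo _ _ B.uz.symm B.u1z.symm, B.sg_zu1, T0 _ B.fz, hsym z q]; rfl
  have Θqu1 : Θ q u1 = c + b := by
    rw [Θo _ _ B.uq.symm B.u1q.symm, B.sg_qu1, T1 _ B.fq, ← hcdef, τc]
  have Θu0 : ∀ y, ¬ H.Adj u y → Θ u y = 0 := by
    intro y hy
    rw [B.au] at hy
    push Not at hy
    simp [Θ, hy.1, hy.2.1, hy.2.2]
  have Θu10 : ∀ y, ¬ H.Adj u1 y → Θ u1 y = 0 := by
    intro y hy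
    rw [B.au1] at hy
    push Not at hy
    simp [Θ, hy.1, hy.2.1, hy.2.2, B.uu1.symm]
  have hadj : ∀ x y, x ≠ u → x ≠ u1 → ((hat H s u u1 z p q).Adj x (sg s u u1 z p q x y) ↔ H.Adj x y) := by
    intro x y h1 h2
    rw [B.hat_adj _ _ h1 h2, sg_invol]
  have Θsame : ∀ x y, H.Adj x y → x ≠ u → x ≠ u1 → y ≠ u → y ≠ u1 → Θ x y = T x (θ x y) := by
    intro x y h h1 h2 h3 h4
    rw [Θo _ _ h1 h2, B.sg_same h h3 h4]
  have ΘN : ∀ x y, ¬ H.Adj x y → Θ x y = 0 := by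
    intro x y h
    by_cases h1 : x = u
    · subst h1; exact Θu0 y h
    by_cases h2 : x = u1
    · subst h2; exact Θu10 y h
    rw [Θo _ _ h1 h2, hz _ _ (by rwa [hadj _ _ h1 h2]), map_zero]
  have ΘNZ : ∀ x y, H.Adj x y → Θ x y ≠ 0 := by
    intro x y h
    by_cases h1 : x = u
    · subst h1
      rcases (B.au y).1 h with rfl | rfl | rfl
      · rwa [Θus]
      · rwa [Θuu1]
      · rwa [Θup]
    by_cases h2 : x = u1
    · subst h2
      rcases (B.au1 y).1 h with rfl | rfl | rfl
      · rwa [Θu1u]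
      · rwa [Θu1z]
      · rwa [Θu1q]
    rw [Θo _ _ h1 h2]
    exact Tnz _ _ (hnz _ _ (by rwa [hadj _ _ h1 h2]))
  have ΘuS : ∀ y, Θ u y = Θ y u := by
    intro y
    by_cases h : H.Adj u y
    · rcases (B.au y).1 h with rfl | rfl | rfl
      · rw [Θus, Θsu]
      · rw [Θuu1, Θu1u]
      · rw [Θup, Θpu]
    · rw [ΘN _ _ h, ΘN _ _ (fun h' => h h'.symm)]
  have Θu1S : ∀ y, Θ u1 y = Θ y u1 := by
    intro y
    by_cases h : H.Adj u1 y
    · rcases (B.au1 y).1 h with rfl | rfl | rfl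
      · rw [Θuu1, Θu1u]
      · rw [Θu1z, Θzu1]
      · rw [Θu1q, Θqu1]
    · rw [ΘN _ _ h, ΘN _ _ (fun h' => h h'.symm)]
  refine ⟨Θ, v, P, hv, hPs, ?_, ΘNZ, ΘN, ?_, ?_, ?_⟩
  · intro x y
    by_cases h1 : x = u
    · subst h1; exact ΘuS y
    by_cases h2 : x = u1
    · subst h2; exact Θu1S y
    by_cases h3 : y = u
    · subst h3; exact (ΘuS x).symm
    by_cases h4 : y = u1
    · subst h4; exact (Θu1S x).symm
    by_cases h : H.Adj x y
    · rw [Θsame _ _ h h1 h2 h3 h4, Θsame _ _ h.symm h3 h4 h1 h2, hsym x y]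
      have : T x = T y := by simp only [T, B.same x y h h1 h2 h3 h4]
      rw [this]
    · rw [ΘN _ _ h, ΘN _ _ (fun h' => h h'.symm)]
  · intro x
    by_cases h1 : x = u
    · subst h1
      rw [B.tu.sum _ (fun y hy => ΘN _ _ hy), Θus, Θuu1, Θup, if_neg (by
        have := B.su; grind)]
      exact selfadd _
    by_cases h2 : x = u1
    · subst h2
      rw [B.tu1.sum _ (fun y hy => ΘN _ _ hy), Θu1u, Θu1z, Θu1q, if_neg (by
        have := B.su1; grind), add_comm b c]
      exact selfadd _
    simp only [Θo _ _ h1 h2]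
    rw [sg_sum (M := Fin 3 → ZMod 2) s u u1 z p q x (fun y => T x (θ x y)), ← map_sum, hsum]
    split_ifs with h
    · rcases h with rfl | rfl
      · rw [T0 _ B.fs]; rfl
      · exact Tv _ rfl
    · exact map_zero _
  · intro y y' hy hy' he
    rw [Θo _ _ hPu hPu1, Θo _ _ hPu hPu1] at he
    have := hinj _ _ (by rwa [hadj _ _ hPu hPu1]) (by rwa [hadj _ _ hPu hPu1]) (Tinj _ he)
    exact (sg s u u1 z p q P).injective this
  · intro y hy hys
    by_cases h3 : y = u
    · subst h3
      have hPp : P = p := by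
        rcases (B.au P).1 hy.symm with h | h | h
        · exact absurd h hPs
        · exact absurd h hPu1
        · exact h
      exact ⟨u1, by rw [Θuu1, hvP (by rw [hPp, B.fp])]⟩
    by_cases h4 : y = u1
    · subst h4
      refine ⟨u, ?_⟩
      rw [Θu1u]
      rcases (B.au1 P).1 hy.symm with h | h | h
      · exact absurd h hPu
      · apply hbv
        rintro hvx
        have hfP : f P = 0 := by rw [h, B.fz]
        have hh : (hat H s u y z p q).Adj P q := by rw [h]; exact adqz.symm
        obtain ⟨a, d, ht⟩ := B.hat_hyp.tri _ hPs hh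
        have hs := hsum P
        rw [if_pos (Or.inr rfl), ht.sum _ (fun y hy => hz _ _ hy)] at hs
        have e1 : θ P q = v := by rw [h, hsym z q, ← hcdef, hcP hfP, hvx]
        have e2 : θ P a = θ P d := by
          have := selfadd (θ P d)
          rw [e1] at hs
          grind
        exact ht.2.2.1 (hinj _ _ ((ht.2.2.2 _).2 (by simp)) ((ht.2.2.2 _).2 (by simp)) e2)
      · exact hvP (by rw [h, B.fq])
    have hh : (hat H s u u1 z p q).Adj P y := by
      have := (hadj P y hPu hPu1).2 hy
      rwa [B.sg_same hy h3 h4] at this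
    obtain ⟨y', hy'⟩ := hnb y hh hys
    refine ⟨sg s u u1 z p q y y', ?_⟩
    rw [Θo _ _ h3 h4, sg_invol, hy']
    exact Tv _ (B.same P y hy hPu hPu1 h3 h4).symm

variable (H) in
theorem Tri.swap {x a b c : V} (h : Tri H x a b c) : Tri H x a c b := by
  obtain ⟨h1, h2, h3, h4⟩ := h
  exact ⟨h2, h1, h3.symm, fun y => by rw [h4]; tauto⟩

open Classical in
theorem main_ind (n : ℕ) : ∀ (H : SimpleGraph V) (s u w : V),
    (Finset.univ.filter (fun x => ∃ y, H.Adj x y)).card = n → Hyp H s u w → Concl H s := by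
  induction n using Nat.strong_induction_on with
  | _ n ih =>
  intro H s u w hn h
  have hsu : H.Adj s u := (h.hs u).2 (by simp)
  have key : ∀ u1 z p q, Tri H u s u1 p → Tri H u1 u z q → K H u s = K H u1 z → Concl H s := by
    intro u1 z p q t1 t2 hK
    obtain ⟨f, B⟩ := mk_bad H h t1 t2 hK
    apply B.back
    refine ih _ ?_ _ s p w rfl B.hat_hyp
    rw [← hn]
    apply Finset.card_lt_card
    rw [Finset.ssubset_iff_of_subset]
    · refine ⟨u, by simpa using ⟨s, hsu.symm⟩, ?_⟩
      simp only [Finset.mem_filter, Finset.mem_univ, true_and, not_exists]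
      exact fun y hy => hy.2.1 rfl
    · intro x hx
      simp only [Finset.mem_filter, Finset.mem_univ, true_and] at hx ⊢
      obtain ⟨y, hy⟩ := hx
      rw [B.hat_adj _ _ hy.2.1 hy.2.2.1] at hy
      exact ⟨_, hy⟩
  obtain ⟨u1, u2, hu⟩ := h.tri H hsu.ne' hsu.symm
  have a1 : H.Adj u u1 := (hu.2.2.2 _).2 (by simp)
  have a2 : H.Adj u u2 := (hu.2.2.2 _).2 (by simp)
  obtain ⟨y1, y2, h1⟩ := h.tri H hu.1.symm a1.symm
  obtain ⟨z1, z2, h2⟩ := h.tri H hu.2.1.symm a2.symm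
  by_cases n1 : K H u1 y1 = K H u s
  · exact key _ _ _ _ hu h1 n1.symm
  by_cases n2 : K H u1 y2 = K H u s
  · exact key _ _ _ _ hu (Tri.swap H h1) n2.symm
  by_cases n3 : K H u2 z1 = K H u s
  · exact key _ _ _ _ (Tri.swap H hu) h2 n3.symm
  by_cases n4 : K H u2 z2 = K H u s
  · exact key _ _ _ _ (Tri.swap H hu) (Tri.swap H h2) n4.symm
  exact direct H h hu h1 h2 n1 n2 n3 n4
end gr7
end Pf

namespace Pf
open Module Submodule
set_option linter.unusedSectionVars false
section fin
variable {V : Type*} [Fintype V] [DecidableEq V]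

theorem walk_sum {G : SimpleGraph V} {a b : V} (p : G.Walk a b) (x : V) :
    ∑ y, (p.edges.count s(x, y) : ZMod 2) = (if x = a then 1 else 0) + (if x = b then 1 else 0) := by
  induction p with
  | nil => simp [ZModModule.add_self]
  | @cons a d b h p ih =>
    have hne := h.ne
    simp only [SimpleGraph.Walk.edges_cons, List.count_cons, Nat.cast_add, Finset.sum_add_distrib, ih]
    have : ∑ y, (((if (s(a, d) == s(x, y)) = true then 1 else 0 : ℕ)) : ZMod 2) =
        (if x = a then 1 else 0) + (if x = d then 1 else 0) := by
      by_cases h1 : x = a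
      · subst h1
        have : ∀ y, (s(x, d) == s(x, y)) = true ↔ y = d := by
          intro y; simp; grind
        simp [this, hne]
      by_cases h2 : x = d
      · subst h2
        have : ∀ y, (s(a, x) == s(x, y)) = true ↔ y = a := by
          intro y; simp; grind
        simp [this, h1]
      · have : ∀ y, ¬ (s(a, d) == s(x, y)) = true := by
          intro y; simp; grind
        simp [this, h1, h2]
    rw [this]
    have := ZModModule.add_self (if x = d then (1 : ZMod 2) else 0)
    grind

theorem nice_of_bridgeless (G : SimpleGraph V) (hbl : Bridgeless G) : Nice G := by
  intro x y hxy
  have h := hbl s(x, y) hxy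
  rw [SimpleGraph.isBridge_iff_forall_cycle_notMem] at h
  push Not at h
  obtain ⟨a, p, hp, hm⟩ := h
  refine ⟨fun x y => (p.edges.count s(x, y) : ZMod 2), ⟨?_, ?_, ?_⟩, ?_⟩
  · intro x y; simp only [Sym2.eq_swap]
  · intro x y hn
    have : s(x, y) ∉ p.edges := fun h => hn (p.edges_subset_edgeSet h)
    simp [List.count_eq_zero_of_not_mem this]
  · intro x; rw [walk_sum]; exact ZModModule.add_self _
  · show (p.edges.count s(x, y) : ZMod 2) = 1
    rw [List.count_eq_one_of_mem hp.isCircuit.isTrail.edges_nodup hm]; simp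
  · exact hxy

variable (G : SimpleGraph V) (u w : V)

theorem S_ll (a b : V) : (subdividePendant G u w).Adj (Sum.inl a) (Sum.inl b) ↔
    G.Adj a b ∧ s(a, b) ≠ s(u, w) := by
  unfold subdividePendant
  rw [SimpleGraph.fromEdgeSet_adj]
  constructor
  · rintro ⟨h | h, hne⟩
    · obtain ⟨e, ⟨h1, h2⟩, h3⟩ := h
      have : e = s(a, b) := by
        apply Sym2.map.injective Sum.inl_injective
        rw [h3]; rfl
      subst this
      exact ⟨h1, h2⟩
    · simp at h
  · rintro ⟨h1, h2⟩
    exact ⟨Or.inl ⟨s(a, b), ⟨h1, h2⟩, rfl⟩, fun h => h1.ne (Sum.inl_injective h)⟩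

theorem S_lr (a : V) (i : Fin 2) : (subdividePendant G u w).Adj (Sum.inl a) (Sum.inr i) ↔
    i = 0 ∧ (a = u ∨ a = w) := by
  unfold subdividePendant
  rw [SimpleGraph.fromEdgeSet_adj]
  constructor
  · rintro ⟨h | h, hne⟩
    · obtain ⟨e, ⟨h1, h2⟩, h3⟩ := h
      induction e with
      | _ => simp at h3
    · simp at h; tauto
  · rintro ⟨rfl, h⟩
    refine ⟨Or.inr ?_, by simp⟩
    simp; exact h

theorem S_rl (a : V) (i : Fin 2) : (subdividePendant G u w).Adj (Sum.inr i) (Sum.inl a) ↔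
    i = 0 ∧ (a = u ∨ a = w) := by
  rw [SimpleGraph.adj_comm, S_lr]

theorem S_rr (i j : Fin 2) : (subdividePendant G u w).Adj (Sum.inr i) (Sum.inr j) ↔
    (i = 0 ∧ j = 1) ∨ (i = 1 ∧ j = 0) := by
  unfold subdividePendant
  rw [SimpleGraph.fromEdgeSet_adj]
  constructor
  · rintro ⟨h | h, hne⟩
    · obtain ⟨e, ⟨h1, h2⟩, h3⟩ := h
      induction e with
      | _ => simp at h3
    · simp at h; tauto
  · intro h
    refine ⟨Or.inr ?_, by rintro ⟨⟩; revert h; revert i; decide⟩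
    simp; tauto

theorem S_s (huw : u ≠ w) : Tri (subdividePendant G u w) (Sum.inr 0) (Sum.inr 1) (Sum.inl u) (Sum.inl w) := by
  refine ⟨by simp, by simp, by simp [huw], ?_⟩
  rintro (a | i)
  · rw [S_rl]; simp
  · rw [S_rr]; simp

theorem tri_cubic (hG : IsCubic G) (a : V) : ∃ b c d, Tri G a b c d := by
  obtain ⟨b, c, d, h1, h2, h3, h4⟩ := Set.ncard_eq_three.1 (hG a)
  refine ⟨b, c, d, h1, h2, h3, fun y => ?_⟩
  rw [← SimpleGraph.mem_neighborSet, h4]; simp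

theorem S_l (hG : IsCubic G) (huw : G.Adj u w) (a : V) :
    ∃ b c d, Tri (subdividePendant G u w) (Sum.inl a) b c d := by
  have hne := huw.ne
  obtain ⟨b, c, d, ht⟩ := tri_cubic G hG a
  by_cases h1 : a = u
  · subst h1
    obtain ⟨c, d, ht⟩ := ht.perm huw
    obtain ⟨n1, n2, n3, h⟩ := ht
    refine ⟨Sum.inr 0, Sum.inl c, Sum.inl d, by simp, by simp, by simpa using n3, ?_⟩
    rintro (y | i)
    · rw [S_ll, h]; simp; grind
    · rw [S_lr]; simp
  by_cases h2 : a = w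
  · subst h2
    obtain ⟨c, d, ht⟩ := ht.perm huw.symm
    obtain ⟨n1, n2, n3, h⟩ := ht
    refine ⟨Sum.inr 0, Sum.inl c, Sum.inl d, by simp, by simp, by simpa using n3, ?_⟩
    rintro (y | i)
    · rw [S_ll, h]; simp; grind
    · rw [S_lr]; simp
  · obtain ⟨n1, n2, n3, h⟩ := ht
    refine ⟨Sum.inl b, Sum.inl c, Sum.inl d, by simpa using n1, by simpa using n2, by simpa using n3, ?_⟩
    rintro (y | i)
    · rw [S_ll, h]; simp; grind
    · rw [S_lr]; simp [h1, h2]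

/-- pendant edge removed -/
def HE : SimpleGraph (V ⊕ Fin 2) where
  Adj x y := (subdividePendant G u w).Adj x y ∧ x ≠ Sum.inr 1 ∧ y ≠ Sum.inr 1
  symm := ⟨fun x y h => ⟨h.1.symm, h.2.2, h.2.1⟩⟩
  loopless := ⟨fun x h => h.1.ne rfl⟩

theorem HE_l (a : V) (y : V ⊕ Fin 2) : (HE G u w).Adj (Sum.inl a) y ↔
    (subdividePendant G u w).Adj (Sum.inl a) y := by
  refine ⟨fun h => h.1, fun h => ⟨h, by simp, ?_⟩⟩
  rintro rfl
  rw [S_lr] at h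
  simp at h

theorem HE_nice (hN : Nice G) (huw : G.Adj u w) : Nice (HE G u w) := by
  have hne := huw.ne
  have key : ∀ φ, IsFl G φ → ∃ ψ, IsFl (HE G u w) ψ ∧
      (∀ a b, s(a, b) ≠ s(u, w) → ψ (Sum.inl a) (Sum.inl b) = φ a b) ∧
      (∀ a, a = u ∨ a = w → ψ (Sum.inl a) (Sum.inr 0) = φ u w) := by
    intro φ hφ
    let ψ : V ⊕ Fin 2 → V ⊕ Fin 2 → ZMod 2 := fun x y => match x, y with
      | Sum.inl a, Sum.inl b => if s(a, b) = s(u, w) then 0 else φ a b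
      | Sum.inl a, Sum.inr i => if i = 0 ∧ (a = u ∨ a = w) then φ u w else 0
      | Sum.inr i, Sum.inl a => if i = 0 ∧ (a = u ∨ a = w) then φ u w else 0
      | Sum.inr _, Sum.inr _ => 0
    refine ⟨ψ, ⟨?_, ?_, ?_⟩, ?_, ?_⟩
    · rintro (a | i) (b | j) <;> simp only [ψ]
      rw [Sym2.eq_swap, hφ.1]
    · rintro (a | i) (b | j) h <;> simp only [ψ]
      · rw [HE_l, S_ll] at h
        split_ifs with h1
        · rfl
        · exact hφ.2.1 _ _ (by tauto)
      · rw [HE_l, S_lr] at h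
        rw [if_neg h]
      · rw [SimpleGraph.adj_comm, HE_l, S_lr] at h
        rw [if_neg h]
    · rintro (a | i)
      · rw [Fintype.sum_sum_type, Fin.sum_univ_two]
        simp only [ψ]
        have e : ∀ b, (if s(a, b) = s(u, w) then 0 else φ a b) =
            φ a b + if s(a, b) = s(u, w) then φ u w else 0 := by
          intro b
          split_ifs with h
          · have : φ a b = φ u w := by
              rw [Sym2.eq_iff] at h
              rcases h with ⟨rfl, rfl⟩ | ⟨rfl, rfl⟩
              · rfl
              · exact hφ.1 _ _
            rw [this, ZModModule.add_self]
          · rw [add_zero]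
        simp only [e, Finset.sum_add_distrib, hφ.2.2]
        by_cases h1 : a = u
        · subst h1
          have : ∀ b, s(a, b) = s(a, w) ↔ b = w := by intro b; simp; grind
          simp [this, ZModModule.add_self]
        by_cases h2 : a = w
        · subst h2
          have : ∀ b, s(a, b) = s(u, a) ↔ b = u := by intro b; simp; grind
          simp [this, ZModModule.add_self]
        · have : ∀ b, ¬ s(a, b) = s(u, w) := by intro b; simp; grind
          simp [this, h1, h2]
      · rw [Fintype.sum_sum_type]
        simp only [ψ, Finset.sum_const_zero, add_zero]
        by_cases hi : i = 0
        · have : ∀ a, (if i = 0 ∧ (a = u ∨ a = w) then φ u w else 0) =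
              (if a = u then φ u w else 0) + (if a = w then φ u w else 0) := by
            intro a
            by_cases h1 : a = u
            · subst h1; simp [hi, hne]
            · simp [hi, h1]
          simp only [this, Finset.sum_add_distrib]
          simp [ZModModule.add_self]
        · simp [hi]
    · intro a b h
      simp only [ψ, if_neg h]
    · intro a h
      simp [ψ, h]
  have base : ∀ a, (a = u ∨ a = w) → ∃ ψ, IsFl (HE G u w) ψ ∧ ψ (Sum.inl a) (Sum.inr 0) = 1 := by
    intro a ha
    obtain ⟨φ, h1, h2⟩ := hN u w huw
    obtain ⟨ψ, k1, k2, k3⟩ := key φ h1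
    exact ⟨ψ, k1, by rw [k3 a ha, h2]⟩
  rintro (a | i) (b | j) h
  · rw [HE_l, S_ll] at h
    obtain ⟨φ, h1, h2⟩ := hN a b h.1
    obtain ⟨ψ, k1, k2, k3⟩ := key φ h1
    exact ⟨ψ, k1, by rw [k2 a b h.2, h2]⟩
  · rw [HE_l, S_lr] at h
    rw [h.1]; exact base a h.2
  · rw [SimpleGraph.adj_comm, HE_l, S_lr] at h
    obtain ⟨ψ, k1, k2⟩ := base b h.2
    exact ⟨ψ, k1, by rw [k1.1, h.1, k2]⟩
  · obtain ⟨h1, h2, h3⟩ := h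
    rw [S_rr] at h1
    rcases h1 with h1 | h1
    · exact absurd (congrArg _ h1.2) h3
    · exact absurd (congrArg _ h1.1) h2

theorem HE_hyp (hG : IsCubic G) (hbl : Bridgeless G) (huw : G.Adj u w) :
    Hyp (HE G u w) (Sum.inr 0) (Sum.inl u) (Sum.inl w) := by
  have hne := huw.ne
  refine ⟨HE_nice G u w (nice_of_bridgeless G hbl) huw, by simpa using hne, ?_, ?_, ?_⟩
  · rintro (a | i)
    · rw [SimpleGraph.adj_comm, HE_l, S_lr]; simp
    · constructor
      · rintro ⟨h1, h2, h3⟩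
        rw [S_rr] at h1
        exfalso
        rcases h1 with h1 | h1
        · exact absurd (congrArg _ h1.2) h3
        · exact absurd h1.1 (by decide)
      · simp
  · rw [HE_l, S_ll]; simp
  · rintro (a | i) hx
    · right
      obtain ⟨b, c, d, h1, h2, h3, h4⟩ := S_l G u w hG huw a
      exact ⟨b, c, d, h1, h2, h3, fun y => by rw [HE_l, h4]⟩
    · left
      intro y h
      apply h.2.1
      have : i ≠ 0 := fun h => hx (congrArg _ h)
      congr 1
      clear hx h
      revert i; decide

end fin
end Pf

namespace Pf
open Module Submodule
set_option linter.unusedSectionVars false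
section fin2

theorem card7 : Fintype.card {m : Fin 3 → ZMod 2 // m ≠ 0} = 7 := by
  rw [Fintype.card_subtype_compl]
  simp [ZMod.card]

theorem nc3 {M : Type*} {a b c : M} (h1 : a ≠ b) (h2 : a ≠ c) (h3 : b ≠ c) :
    ({a, b, c} : Set M).ncard = 3 := Set.ncard_eq_three.2 ⟨a, b, c, h1, h2, h3, rfl⟩

theorem nc5 {M : Type*} {a b c d e : M} (h1 : a ≠ b) (h2 : a ≠ c) (h3 : b ≠ c)
    (h4 : d ≠ a) (h5 : d ≠ b) (h6 : d ≠ c) (h7 : e ≠ a) (h8 : e ≠ b) (h9 : e ≠ c) (h10 : d ≠ e) :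
    ({a, b, c, d, e} : Set M).ncard = 5 := by
  have : ({a, b, c, d, e} : Set M) = insert d (insert e {a, b, c}) := by
    ext x; simp; tauto
  rw [this, Set.ncard_insert_of_notMem (by simp; tauto) (by simp),
    Set.ncard_insert_of_notMem (by simp; tauto) (by simp), nc3 h1 h2 h3]

theorem set5 {M : Type*} (a b c d e : M) : ({a, b, c, d, e} : Set M) = {a, d, e, b, c} := by
  ext x; simp; tauto

theorem lineline {r a b c d : Fin 3 → ZMod 2} (hr : r ≠ 0) (ha : a ≠ 0) (hb : b ≠ 0) (hc : c ≠ 0)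
    (hd : d ≠ 0) (h1 : r + a + b = 0) (h2 : r + c + d = 0) :
    ({r, a, b, c, d} : Set (Fin 3 → ZMod 2)).ncard = 3 ∨
    ({r, a, b, c, d} : Set (Fin 3 → ZMod 2)).ncard = 5 := by
  have s1 := ZModModule.add_self (r : Fin 3 → ZMod 2)
  have s2 := ZModModule.add_self (a : Fin 3 → ZMod 2)
  have s3 := ZModModule.add_self (b : Fin 3 → ZMod 2)
  have s4 := ZModModule.add_self (c : Fin 3 → ZMod 2)
  have s5 := ZModModule.add_self (d : Fin 3 → ZMod 2)
  have d1 : r ≠ a := by grind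
  have d2 : r ≠ b := by grind
  have d3 : a ≠ b := by grind
  by_cases e1 : c = a
  · left
    have : d = b := by grind
    subst this e1
    refine Eq.trans ?_ (nc3 d1 d2 d3); congr 1; ext x; simp
  by_cases e2 : c = b
  · left
    have : d = a := by grind
    subst this e2
    refine Eq.trans ?_ (nc3 d1 d2 d3); congr 1; ext x; simp; tauto
  right
  exact nc5 d1 d2 d3 (by grind) e1 e2 (by grind) (by grind) (by grind) (by grind)

theorem ptline {v r a b c d : Fin 3 → ZMod 2} (hv : v ≠ 0) (hr : r ≠ 0) (ha : a ≠ 0) (hb : b ≠ 0)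
    (hra : r ≠ a) (hrb : r ≠ b) (hab : a ≠ b)
    (h1 : r + a + b = v) (h2 : r + c + d = 0) (h3 : r = v ∨ c = v ∨ d = v) :
    ({r, a, b, c, d} : Set (Fin 3 → ZMod 2)).ncard = 5 := by
  have s1 := ZModModule.add_self (r : Fin 3 → ZMod 2)
  have s2 := ZModModule.add_self (a : Fin 3 → ZMod 2)
  have s3 := ZModModule.add_self (b : Fin 3 → ZMod 2)
  have s4 := ZModModule.add_self (c : Fin 3 → ZMod 2)
  have s5 := ZModModule.add_self (d : Fin 3 → ZMod 2)
  have s6 := ZModModule.add_self (v : Fin 3 → ZMod 2)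
  rcases h3 with h3 | h3 | h3
  · exfalso; apply hab; grind
  · subst h3
    have e : d = a + b := by grind
    exact nc5 hra hrb hab (by grind) (by grind) (by grind) (by grind) (by grind) (by grind) (by grind)
  · subst h3
    have e : c = a + b := by grind
    exact nc5 hra hrb hab (by grind) (by grind) (by grind) (by grind) (by grind) (by grind) (by grind)

variable {V : Type*} [Fintype V] [DecidableEq V]

theorem colorSet_tri {W : Type*} {C : Type*} {S : SimpleGraph W} {x a b d : W} (h : Tri S x a b d)
    (c : Sym2 W → C) : colorSet S c x = {c s(x, a), c s(x, b), c s(x, d)} := by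
  obtain ⟨_, _, _, h⟩ := h
  ext m
  simp only [colorSet, Set.mem_image, Set.mem_insert_iff, Set.mem_singleton_iff]
  constructor
  · rintro ⟨e, ⟨h1, h2⟩, rfl⟩
    obtain ⟨y, rfl⟩ := h2
    rw [SimpleGraph.mem_edgeSet, h] at h1
    rcases h1 with rfl | rfl | rfl <;> simp
  · rintro (rfl | rfl | rfl)
    · exact ⟨_, ⟨(h a).2 (by simp), by simp⟩, rfl⟩
    · exact ⟨_, ⟨(h b).2 (by simp), by simp⟩, rfl⟩
    · exact ⟨_, ⟨(h d).2 (by simp), by simp⟩, rfl⟩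

set_option maxHeartbeats 1000000 in
theorem final (G : SimpleGraph V) (hG : IsCubic G) (hbl : Bridgeless G) (u w : V)
    (huw : G.Adj u w) :
    ∃ c : Sym2 (V ⊕ Fin 2) → Fin 7,
      IsProperEdgeColoring (subdividePendant G u w) c ∧
      ∀ x y : V ⊕ Fin 2, (subdividePendant G u w).Adj x y →
        s(x, y) ≠ s((Sum.inr 0 : V ⊕ Fin 2), (Sum.inr 1 : V ⊕ Fin 2)) →
        IsPoorAt (subdividePendant G u w) c x y ∨ IsRichAt (subdividePendant G u w) c x y := by
  obtain ⟨θ, v, P, hv, hPs, hsym, hnz, hz, hsum, hinj, hnb⟩ :=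
    main_ind _ _ _ _ _ rfl (HE_hyp G u w hG hbl huw)
  have selfadd : ∀ m : Fin 3 → ZMod 2, m + m = 0 := ZModModule.add_self
  set S := subdividePendant G u w with hS
  set s : V ⊕ Fin 2 := Sum.inr 0 with hs
  set t : V ⊕ Fin 2 := Sum.inr 1 with ht
  have hst : s ≠ t := by simp [hs, ht]
  have hcases : ∀ x, x = s ∨ x = t ∨ ∃ a, x = Sum.inl a := by
    rintro (a | i)
    · right; right; exact ⟨a, rfl⟩
    · have : i = 0 ∨ i = 1 := by revert i; decide
      rcases this with rfl | rfl
      · left; rfl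
      · right; left; rfl
  have tadj : ∀ y, S.Adj t y ↔ y = s := by
    rintro (a | i)
    · rw [hS, S_rl]; simp [hs]
    · rw [hS, S_rr]; simp [hs]
  have ts := S_s G u w huw.ne
  have hPt : P ≠ t := by
    rintro rfl
    have := hsum t
    rw [if_pos (Or.inr rfl), Finset.sum_eq_zero (fun y _ => hz _ _ (fun h => h.2.1 rfl))] at this
    exact hv this.symm
  have Stri : ∀ x, x ≠ t → ∃ a b d, Tri S x a b d := by
    intro x hx
    rcases hcases x with rfl | h | ⟨a, rfl⟩
    · exact ⟨_, _, _, ts⟩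
    · exact absurd h hx
    · exact S_l G u w hG huw a
  have HEadj : ∀ x y, (HE G u w).Adj x y ↔ S.Adj x y ∧ x ≠ t ∧ y ≠ t := fun x y => Iff.rfl
  let Θ : V ⊕ Fin 2 → V ⊕ Fin 2 → (Fin 3 → ZMod 2) := fun x y =>
    if s(x, y) = s(s, t) then v else θ x y
  have Θsym : ∀ x y, Θ x y = Θ y x := by
    intro x y; simp only [Θ]; rw [Sym2.eq_swap, hsym]
  have Θst : Θ s t = v := by simp [Θ]
  have Θne : ∀ x y, s(x, y) ≠ s(s, t) → Θ x y = θ x y := fun x y h => if_neg h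
  have adjne : ∀ x y, S.Adj x y → s(x, y) ≠ s(s, t) → x ≠ t ∧ y ≠ t := by
    intro x y h hn
    constructor
    · rintro rfl
      rw [tadj] at h
      apply hn; rw [h, Sym2.eq_swap]
    · rintro rfl
      have := (tadj x).1 h.symm
      apply hn; rw [this]
  have Θnz : ∀ x y, S.Adj x y → Θ x y ≠ 0 := by
    intro x y h
    by_cases h1 : s(x, y) = s(s, t)
    · simp only [Θ, if_pos h1]; exact hv
    · rw [Θne _ _ h1]; exact hnz _ _ ⟨h, adjne _ _ h h1⟩
  have Θz : ∀ x y, ¬ S.Adj x y → Θ x y = 0 := by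
    intro x y h
    rw [Θne, hz _ _ (fun h' => h h'.1)]
    intro h1
    rw [← SimpleGraph.mem_edgeSet, h1, SimpleGraph.mem_edgeSet] at h
    exact h ((tadj s).2 rfl).symm
  have Θsum : ∀ x, x ≠ t → ∑ y, Θ x y = if x = P then v else 0 := by
    intro x hx
    by_cases h1 : x = s
    · subst h1
      rw [if_neg hPs.symm]
      have : ∀ y, Θ s y = θ s y + if y = t then v else 0 := by
        intro y
        by_cases hy : y = t
        · rw [hy, Θst, if_pos rfl, hz _ _ (fun h => h.2.2 rfl), zero_add]
        · rw [if_neg hy, add_zero, Θne]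
          simp [hy, hst]
      simp only [this, Finset.sum_add_distrib, hsum]
      simp [selfadd]
    · have : ∀ y, Θ x y = θ x y := by
        intro y; apply Θne; simp [h1, hx]
      simp only [this, hsum, h1, false_or]
  have line : ∀ x a b d, Tri S x a b d → x ≠ t → Θ x a + Θ x b + Θ x d = if x = P then v else 0 := by
    intro x a b d h hx
    rw [← Θsum x hx, h.sum _ (fun y hy => Θz _ _ hy)]
  have Θinj : ∀ x a b, x ≠ t → S.Adj x a → S.Adj x b → a ≠ b → Θ x a ≠ Θ x b := by
    intro x a b hx ha hb hab he
    by_cases hP : x = P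
    · subst hP
      have e : ∀ y, Θ x y = θ x y := by
        intro y; apply Θne; simp [hPs, hPt]
      rw [e, e] at he
      have q : ∀ y, S.Adj x y → (HE G u w).Adj x y := by
        intro y hy
        refine ⟨hy, hx, ?_⟩
        rintro rfl
        exact hPs ((tadj x).1 hy.symm)
      exact hab (hinj _ _ (q _ ha) (q _ hb) he)
    · obtain ⟨a', b', d', h⟩ := Stri x hx
      obtain ⟨b', d', h⟩ := h.perm ha
      obtain ⟨d', h⟩ := h.perm2 hb hab.symm
      have := line _ _ _ _ h hx
      rw [if_neg hP, he, selfadd, zero_add] at this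
      exact Θnz _ _ ((h.2.2.2 _).2 (by simp)) this
  have Pnb : ∀ y, S.Adj P y → ∃ y', Θ y y' = v := by
    intro y hy
    have hyt : y ≠ t := by
      rintro rfl
      exact hPs ((tadj P).1 hy.symm)
    by_cases hys : y = s
    · subst hys; exact ⟨t, Θst⟩
    · obtain ⟨y', h⟩ := hnb y ⟨hy, hPt, hyt⟩ hys
      refine ⟨y', ?_⟩
      rw [Θne, h]; simp [hys, hyt]
  let E : {m : Fin 3 → ZMod 2 // m ≠ 0} ≃ Fin 7 := Fintype.equivFinOfCardEq card7
  let g : (Fin 3 → ZMod 2) → Fin 7 := fun m => if h : m ≠ 0 then E ⟨m, h⟩ else 0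
  have ginj : ∀ m n, m ≠ 0 → n ≠ 0 → g m = g n → m = n := by
    intro m n hm hn h
    simp only [g, dif_pos hm, dif_pos hn] at h
    exact congrArg Subtype.val (E.injective h)
  let c : Sym2 (V ⊕ Fin 2) → Fin 7 := fun e => g (Sym2.lift ⟨Θ, Θsym⟩ e)
  have cv : ∀ x y, c s(x, y) = g (Θ x y) := fun x y => rfl
  refine ⟨c, ?_, ?_⟩
  · rintro e he e' he' hne ⟨x, hx, hx'⟩
    obtain ⟨a, rfl⟩ := hx
    obtain ⟨b, rfl⟩ := hx'
    rw [SimpleGraph.mem_edgeSet] at he he'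
    have hab : a ≠ b := by rintro rfl; exact hne rfl
    intro h
    rw [cv, cv] at h
    have h := ginj _ _ (Θnz _ _ he) (Θnz _ _ he') h
    by_cases hx : x = t
    · subst hx
      rw [tadj] at he he'
      exact hab (he.trans he'.symm)
    · exact Θinj x a b hx he he' hab h
  · intro x y hxy hn
    obtain ⟨hxt, hyt⟩ := adjne x y hxy hn
    obtain ⟨_, _, _, h1⟩ := Stri x hxt
    obtain ⟨a, b, h1⟩ := h1.perm hxy
    obtain ⟨_, _, _, h2⟩ := Stri y hyt
    obtain ⟨a', b', h2⟩ := h2.perm hxy.symm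
    have xa : S.Adj x a := (h1.2.2.2 _).2 (by simp)
    have xb : S.Adj x b := (h1.2.2.2 _).2 (by simp)
    have ya : S.Adj y a' := (h2.2.2.2 _).2 (by simp)
    have yb : S.Adj y b' := (h2.2.2.2 _).2 (by simp)
    have l1 := line _ _ _ _ h1 hxt
    have l2 := line _ _ _ _ h2 hyt
    rw [Θsym y x] at l2
    have key : (colorSet S c x ∪ colorSet S c y).ncard =
        ({Θ x y, Θ x a, Θ x b, Θ y a', Θ y b'} : Set (Fin 3 → ZMod 2)).ncard := by
      rw [← Set.ncard_image_of_injOn (f := g)]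
      · rw [colorSet_tri h1, colorSet_tri h2]
        simp only [cv, Set.image_insert_eq, Set.image_singleton, Θsym y x]
        congr 1; ext m; simp; tauto
      · have : ∀ m ∈ ({Θ x y, Θ x a, Θ x b, Θ y a', Θ y b'} : Set (Fin 3 → ZMod 2)), m ≠ 0 := by
          rintro m (rfl | rfl | rfl | rfl | rfl)
          · exact Θnz _ _ hxy
          · exact Θnz _ _ xa
          · exact Θnz _ _ xb
          · exact Θnz _ _ ya
          · exact Θnz _ _ yb
        intro m hm n hn h
        exact ginj _ _ (this m hm) (this n hn) h
    have vmem : ∀ x a b a', Tri S x a b a' → (∃ y, Θ x y = v) → Θ x a = v ∨ Θ x b = v ∨ Θ x a' = v := by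
      rintro x a b a' h ⟨y, hy⟩
      have : S.Adj x y := by by_contra h'; rw [Θz _ _ h'] at hy; exact hv hy.symm
      rcases (h.2.2.2 y).1 this with rfl | rfl | rfl <;> simp [hy]
    unfold IsPoorAt IsRichAt
    rw [key]
    by_cases hxP : x = P
    · have hyP : y ≠ P := by rintro rfl; exact hxy.ne hxP
      rw [if_pos hxP] at l1
      rw [if_neg hyP] at l2
      right
      have := vmem _ _ _ _ h2 (Pnb y (hxP ▸ hxy))
      rw [Θsym y x] at this
      exact ptline hv (Θnz _ _ hxy) (Θnz _ _ xa) (Θnz _ _ xb) (Θinj x y a hxt hxy xa h1.1)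
        (Θinj x y b hxt hxy xb h1.2.1) (Θinj x a b hxt xa xb h1.2.2.1) l1 l2 this
    · rw [if_neg hxP] at l1
      by_cases hyP : y = P
      · rw [if_pos hyP] at l2
        right
        have := vmem _ _ _ _ h1 (Pnb x (hyP ▸ hxy.symm))
        have e : ({Θ x y, Θ x a, Θ x b, Θ y a', Θ y b'} : Set (Fin 3 → ZMod 2)) =
            {Θ x y, Θ y a', Θ y b', Θ x a, Θ x b} := set5 _ _ _ _ _
        rw [e]
        have k1 := Θinj y x a' hyt hxy.symm ya h2.1
        have k2 := Θinj y x b' hyt hxy.symm yb h2.2.1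
        rw [Θsym y x] at k1 k2
        exact ptline hv (Θnz _ _ hxy) (Θnz _ _ ya) (Θnz _ _ yb) k1 k2
          (Θinj y a' b' hyt ya yb h2.2.2.1) l2 l1 this
      · rw [if_neg hyP] at l2
        exact lineline (Θnz _ _ hxy) (Θnz _ _ xa) (Θnz _ _ xb) (Θnz _ _ ya) (Θnz _ _ yb) l1 l2
end fin2
end Pf

theorem stmt_13 {V : Type*} [Fintype V] (G : SimpleGraph V)
    (hG : IsCubic G) (hbl : Bridgeless G) (u w : V) (huw : G.Adj u w) :
    ∃ c : Sym2 (V ⊕ Fin 2) → Fin 7,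
      IsProperEdgeColoring (subdividePendant G u w) c ∧
      ∀ x y : V ⊕ Fin 2, (subdividePendant G u w).Adj x y →
        s(x, y) ≠ s((Sum.inr 0 : V ⊕ Fin 2), (Sum.inr 1 : V ⊕ Fin 2)) →
        IsPoorAt (subdividePendant G u w) c x y ∨ IsRichAt (subdividePendant G u w) c x y := by
  classical
  exact Pf.final G hG hbl u w huw
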